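/- For every D ∈ (0, 1/2) and every Δ > 0 there exist an even integer δ ≥ 2, positive integers d_v < d_c with 1 − d_v/d_c ≤ 1 − h(D) + Δ, a constant c > 0, and N₀ ∈ ℕ, such that for every n ≥ N₀ with d_c ∣ d_v·n and D·n ∈ ℕ the following holds. Let k := d_v·n/d_c, let H be chosen uniformly at random from the (nonempty) set of k×n matrices over ZMod 2 in which every column has exactly d_v ones and every row exactly d_c ones; let x(·) be the random encoding of the degree-δ LDGM ensemble with n inputs and blocklength n, independent of H; and let S be uniform on (ZMod 2)^n, independent of both. Then P(∃ z ∈ (ZMod 2)^n with H·z = 0 and hammingDist(x(z), S) ≤ D·n) ≥ 1 − exp(−c·n). -/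

import Mathlib

/-!
The proof is a second-moment argument for the number of codewords close to the source, made
exponentially reliable by a bounded-difference concentration inequality. Entropies are in nats
(`Real.binEntropy`) throughout.

Fix `a < D` such that `h(a)` still exceeds the number of checks per bit, `d_v / d_c`, by some
`γ > 0`, and let `C` be the LDPC code of `H`. For two codewords `z, z'` at relative distance `w`,
the bits of `x(z) - x(z')` are independent with bias `(1 - 2w)^δ`, so a Chernoff bound
(`pair_bound_entropy`) bounds the probability that `S` is within `a n` of both by
`(exp (n h(a)) / 2^n)^2 (1 + (1 - 2w)^δ)^n`. The second-moment inequality (`second_moment`)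
therefore shows that `S` is within `a n` of the compound code with probability at least
`exp (-5 ε n)`, provided that the weight enumerator of `C` satisfies
`∑ (1 + (1 - 2w)^δ)^n ≤ exp (2 ε n) 2^n / 2^k` over codewords of weight in `[ω n, (1 - ω) n]`; the
other codewords are so few that the trivial bound suffices for them (`covered_lower`).

The enumerator bound holds on average. In the configuration model of the regular LDPC ensemble a
word of relative weight `w` satisfies all checks with probability at most
`poly(n) ((1 + (1 - 2w)^{d_c}) / 2)^k`, and a switching argument shows that a configuration has no
multiple edge with probability at least `1 / poly(n)`, so that the bound survives conditioning
(`prob_codeword_le`). Since `h(w) ≤ log 2 - (1 - 2w)^2 / 4`, the growth factor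
`(1 + (1 - 2w)^δ) (1 + (1 - 2w)^{d_c}) ≤ exp ((1 - 2w)^2 / 4)` is harmless away from the end points
once `δ` and `d_c` are large (`mid_factor`, `sum_mid_le`); Markov's inequality then covers all but an
exponentially small fraction of `H`.

Finally, changing one coordinate of the source and its `δ` LDGM indices changes the distance from `S`
to the compound code by at most one. As the event `distance ≤ a n` has probability at least
`exp (-5 ε n)` and `ε` is small compared with `(D - a)^2`, the two-sided concentration inequality
`concentration` forces the event `distance > D n` to be exponentially unlikely (`uncovered_upper`).
-/


open Finset
open scoped BigOperators Classical

noncomputable section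

/-- `ldgmBeta w δ = (1 - (1-2w)^δ)/2`: the Bernoulli parameter induced by an
input of relative weight `w` in the degree-`δ` LDGM ensemble. -/
def ldgmBeta (w : ℝ) (δ : ℕ) : ℝ := (1 - (1 - 2 * w) ^ δ) / 2

/-- `ldgmU D δ = (1 - (1-2D)^(1/δ))/2`. -/
def ldgmU (D : ℝ) (δ : ℕ) : ℝ := (1 - (1 - 2 * D) ^ ((1 : ℝ) / δ)) / 2

/-- Binary entropy function (in bits). -/
def binEnt (x : ℝ) : ℝ := -(x * Real.logb 2 x) - (1 - x) * Real.logb 2 (1 - x)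

/-- Binary Kullback–Leibler divergence (in bits). -/
def klBin (a p : ℝ) : ℝ := a * Real.logb 2 (a / p) + (1 - a) * Real.logb 2 ((1 - a) / (1 - p))

/-- Probability of the event `E` under the uniform distribution on the finite type `Ω`. -/
def unifP (Ω : Type*) [Fintype Ω] (E : Ω → Prop) : ℝ :=
  ((Finset.univ.filter E).card : ℝ) / (Fintype.card Ω : ℝ)

/-- Conditional probability of `E` given `F` under the uniform distribution on `Ω`. -/
def unifCondP (Ω : Type*) [Fintype Ω] (E F : Ω → Prop) : ℝ :=
  unifP Ω (fun ω => E ω ∧ F ω) / unifP Ω F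

/-- Expectation of `f` under the uniform distribution on the finite type `Ω`. -/
def unifE (Ω : Type*) [Fintype Ω] (f : Ω → ℝ) : ℝ :=
  (∑ ω : Ω, f ω) / (Fintype.card Ω : ℝ)

/-- The encoding map of the degree-`δ` LDGM ensemble with `m` inputs and blocklength `n`:
given the random index choices `I`, the `j`-th codeword bit of `z` is
`z (I j 1) + ⋯ + z (I j δ)` (mod 2). -/
def ldgmEnc {m n δ : ℕ} (I : Fin n → Fin δ → Fin m) (z : Fin m → ZMod 2) :
    Fin n → ZMod 2 := fun j => ∑ i : Fin δ, z (I j i)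

/-- `H` is a `(d_v, d_c)`-regular parity check matrix: every column contains exactly
`dv` ones and every row contains exactly `dc` ones. -/
def regularLDPC {k n : ℕ} (dv dc : ℕ) (H : Matrix (Fin k) (Fin n) (ZMod 2)) : Prop :=
  (∀ j, (Finset.univ.filter (fun i => H i j = 1)).card = dv) ∧
    (∀ i, (Finset.univ.filter (fun j => H i j = 1)).card = dc)

/-! ### Concentration for functions with bounded differences -/

/-- The pairing step in the induction for `mgf_bound`: two fibres whose exponential sums `a, a'` differ by
a factor at most `exp l` contribute at most `2 cosh l` times the product bound `K`. -/
theorem mgf_pair_bound {a b a' b' K l : ℝ} (ha : 0 < a) (ha' : 0 < a')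
    (hb : a * b ≤ K) (hb' : a' * b' ≤ K) (hK : 0 ≤ K)
    (h1 : a ≤ Real.exp l * a') (h2 : a' ≤ Real.exp l * a) :
    a * b' + a' * b ≤ K * (2 * Real.cosh l) := by
  have hb1 : b ≤ K / a := by rw [le_div_iff₀ ha]; linarith
  have hb2 : b' ≤ K / a' := by rw [le_div_iff₀ ha']; linarith
  have h3 : a * b' + a' * b ≤ K * (a / a' + a' / a) := by
    calc a * b' + a' * b ≤ a * (K / a') + a' * (K / a) := by gcongr
      _ = _ := by ring
  refine h3.trans (mul_le_mul_of_nonneg_left ?_ hK)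
  rw [Real.cosh_eq]
  set r := a / a' with hr
  have hrpos : 0 < r := div_pos ha ha'
  have hinv : a' / a = 1 / r := by rw [hr, one_div_div]
  rw [hinv]
  have hr1 : r ≤ Real.exp l := by rw [hr, div_le_iff₀ ha']; exact h1
  have hr2 : 1 / r ≤ Real.exp l := by rw [← hinv, div_le_iff₀ ha]; exact h2
  have hel : Real.exp l * Real.exp (-l) = 1 := by rw [← Real.exp_add]; simp
  have hrr : r * (1 / r) = 1 := by field_simp
  have hE := Real.exp_pos (-l)
  nlinarith [mul_nonneg (sub_nonneg.2 hr1) (mul_nonneg hE.le (sub_nonneg.2 hr2))]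

/-- The product of the exponential sums of `f` and `-f` for a function `f` that grows by at most one under
a change of one coordinate. Since changes are reversible, this is the bounded-difference condition; the
product form avoids any reference to the mean of `f`. -/
theorem mgf_bound {Ω : Type*} [Fintype Ω] (l : ℝ) (hl : 0 ≤ l) :
    ∀ (n : ℕ) (f : (Fin n → Ω) → ℝ), (∀ x i a, f (Function.update x i a) ≤ f x + 1) →
      (∑ x, Real.exp (l * f x)) * (∑ x, Real.exp (-(l * f x)))
        ≤ Real.cosh l ^ n * (Fintype.card Ω : ℝ) ^ (2 * n) := by
  intro n
  induction n with
  | zero =>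
    intro f _
    simp [← Real.exp_add]
  | succ n ih =>
    intro f hf
    set a : Ω → ℝ := fun c => ∑ x : Fin n → Ω, Real.exp (l * f (Fin.cons c x)) with ha
    set b : Ω → ℝ := fun c => ∑ x : Fin n → Ω, Real.exp (-(l * f (Fin.cons c x))) with hb
    have hsplit : ∀ g : (Fin (n + 1) → Ω) → ℝ, ∑ x, g x = ∑ c, ∑ x : Fin n → Ω, g (Fin.cons c x) := by
      intro g
      rw [← Fintype.sum_prod_type']
      exact (Fintype.sum_equiv (Fin.consEquiv (fun _ => Ω)) _ _ (fun _ => rfl)).symm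
    rw [hsplit, hsplit]
    change (∑ c, a c) * (∑ c, b c) ≤ _
    set K : ℝ := Real.cosh l ^ n * (Fintype.card Ω : ℝ) ^ (2 * n) with hK
    have hK0 : 0 ≤ K := by have := Real.cosh_pos l; positivity
    have hab : ∀ c, a c * b c ≤ K := by
      intro c
      apply ih (fun x => f (Fin.cons c x))
      intro x i d
      have := hf (Fin.cons c x) i.succ d
      rwa [← Fin.cons_update] at this
    have hapos : ∀ c, 0 < a c := by
      intro c
      have : Nonempty Ω := ⟨c⟩
      exact Finset.sum_pos (fun _ _ => Real.exp_pos _) Finset.univ_nonempty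
    have hcomp : ∀ c d, a c ≤ Real.exp l * a d := by
      intro c d
      simp only [ha, Finset.mul_sum]
      refine Finset.sum_le_sum fun x _ => ?_
      rw [← Real.exp_add, Real.exp_le_exp]
      have := hf (Fin.cons d x) 0 c
      rw [Fin.update_cons_zero] at this
      nlinarith
    -- symmetrizing the double sum over the first coordinate pairs the fibres `c` and `d`
    have htwo : 2 * ((∑ c, a c) * (∑ c, b c)) = ∑ c, ∑ d, (a c * b d + a d * b c) := by
      simp only [Finset.sum_add_distrib]
      rw [← Finset.sum_mul_sum]
      rw [Finset.sum_comm (f := fun c d => a d * b c), ← Finset.sum_mul_sum]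
      ring
    have hle : ∑ c, ∑ d, (a c * b d + a d * b c) ≤ ∑ _c : Ω, ∑ _d : Ω, K * (2 * Real.cosh l) :=
      Finset.sum_le_sum fun c _ => Finset.sum_le_sum fun d _ =>
        mgf_pair_bound (hapos c) (hapos d) (hab c) (hab d) hK0 (hcomp c d) (hcomp d c)
    simp only [Finset.sum_const, Finset.card_univ, nsmul_eq_mul] at hle
    have : Real.cosh l ^ (n + 1) * (Fintype.card Ω : ℝ) ^ (2 * (n + 1)) =
       Fintype.card Ω * (Fintype.card Ω * (K * Real.cosh l)) := by rw [hK]; ring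
    rw [this]; linarith

/-- A function with bounded differences cannot be both `≤ α` and `≥ β = α + t n` on sets of
non-negligible measure. -/
theorem concentration {Ω : Type*} [Fintype Ω] {n : ℕ} (f : (Fin n → Ω) → ℝ)
    (hf : ∀ x i a, f (Function.update x i a) ≤ f x + 1) (t α β : ℝ) (ht : 0 ≤ t)
    (hαβ : β - α = t * n) :
    (#{x | f x ≤ α} : ℝ) * (#{x | β ≤ f x} : ℝ)
      ≤ Real.exp (-(t ^ 2 / 2 * n)) * (Fintype.card Ω : ℝ) ^ (2 * n) := by
  have h := mgf_bound t ht n f hf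
  have h1 : (#{x | f x ≤ α} : ℝ) * Real.exp (-(t * α)) ≤ ∑ x, Real.exp (-(t * f x)) := by
    rw [← nsmul_eq_mul]
    calc _ ≤ ∑ x ∈ univ.filter (fun x => f x ≤ α), Real.exp (-(t * f x)) := by
          refine Finset.card_nsmul_le_sum _ _ _ fun x hx => ?_
          simp only [Finset.mem_filter, Finset.mem_univ, true_and] at hx
          rw [Real.exp_le_exp]; nlinarith
      _ ≤ _ := Finset.sum_le_univ_sum_of_nonneg fun _ => (Real.exp_pos _).le
  have h2 : (#{x | β ≤ f x} : ℝ) * Real.exp (t * β) ≤ ∑ x, Real.exp (t * f x) := by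
    rw [← nsmul_eq_mul]
    calc _ ≤ ∑ x ∈ univ.filter (fun x => β ≤ f x), Real.exp (t * f x) := by
          refine Finset.card_nsmul_le_sum _ _ _ fun x hx => ?_
          simp only [Finset.mem_filter, Finset.mem_univ, true_and] at hx
          rw [Real.exp_le_exp]; nlinarith
      _ ≤ _ := Finset.sum_le_univ_sum_of_nonneg fun _ => (Real.exp_pos _).le
  have h3 := mul_le_mul h2 h1 (by positivity) (Finset.sum_nonneg fun _ _ => (Real.exp_pos _).le)
  have h4 := h3.trans h
  have hcosh : Real.cosh t ^ n ≤ Real.exp (t ^ 2 / 2 * n) := by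
    rw [mul_comm, Real.exp_nat_mul]
    exact pow_le_pow_left₀ (Real.cosh_pos t).le (Real.cosh_le_exp_half_sq t) n
  have h5 : (#{x | f x ≤ α} : ℝ) * (#{x | β ≤ f x} : ℝ) * Real.exp (t ^ 2 * n)
      ≤ Real.exp (t ^ 2 / 2 * n) * (Fintype.card Ω : ℝ) ^ (2 * n) := by
    calc _ = #{x | β ≤ f x} * Real.exp (t * β) * (#{x | f x ≤ α} * Real.exp (-(t * α))) := by
          have : Real.exp (t ^ 2 * n) = Real.exp (t * β) * Real.exp (-(t * α)) := by
            rw [← Real.exp_add]; congr 1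
            linear_combination (-t) * hαβ
          rw [this]; ring
      _ ≤ _ := h4.trans (by gcongr)
  have h6 : Real.exp (t ^ 2 / 2 * n) = Real.exp (-(t ^ 2 / 2 * n)) * Real.exp (t ^ 2 * n) := by
    rw [← Real.exp_add]; congr 1; ring
  rw [h6, mul_right_comm (Real.exp _) (Real.exp _)] at h5
  exact le_of_mul_le_mul_right h5 (Real.exp_pos _)

/-! ### Binomial coefficients and entropy -/

/-- Terms of the binomial expansion of `(w + (N-w))^N`. -/
def binTerm (N w j : ℕ) : ℕ := N.choose j * w ^ j * (N - w) ^ (N - j)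

theorem binTerm_step (N w j : ℕ) (hj : j < N) :
    (j + 1) * (N - w) * binTerm N w (j + 1) = (N - j) * w * binTerm N w j := by
  have h1 : (j + 1) * N.choose (j + 1) = (N - j) * N.choose j := by
    have := Nat.choose_succ_right_eq N j
    linarith
  have h2 : (N - w) ^ (N - j) = (N - w) * (N - w) ^ (N - (j + 1)) := by
    rw [← pow_succ']; congr 1; omega
  unfold binTerm
  rw [h2, pow_succ]
  calc _ = ((j + 1) * N.choose (j + 1)) * ((N - w) * (w ^ j * w) * (N - w) ^ (N - (j+1))) := by ring
    _ = _ := by rw [h1]; ring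

/-- The binomial distribution with mean `w` has its mode at `w`. -/
theorem binTerm_le (N w j : ℕ) (hw : w ≤ N) (hj : j ≤ N) : binTerm N w j ≤ binTerm N w w := by
  rcases Nat.lt_or_ge 0 w with hw0 | hw0
  swap
  · obtain rfl : w = 0 := by omega
    rcases Nat.eq_zero_or_pos j with rfl | h
    · rfl
    · simp [binTerm, zero_pow h.ne']
  rcases hw.lt_or_eq with hwN | hwN
  swap
  · subst hwN
    rcases hj.lt_or_eq with h | h
    · have : w - j ≠ 0 := by omega
      simp [binTerm, zero_pow this]
    · rw [h]
  have hup : ∀ d, d ≤ w → binTerm N w (w - d) ≤ binTerm N w w := by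
    intro d
    induction d with
    | zero => intro _; simp
    | succ d ih =>
      intro hd
      refine le_trans ?_ (ih (by omega))
      have hs := binTerm_step N w (w - (d + 1)) (by omega)
      have e : w - (d + 1) + 1 = w - d := by omega
      rw [e] at hs
      have hc : (w - d) * (N - w) ≤ (N - (w - (d + 1))) * w := by
        rw [Nat.mul_comm (w - d)]
        exact Nat.mul_le_mul (by omega) (by omega)
      have hpos : 0 < (w - d) * (N - w) := Nat.mul_pos (by omega) (by omega)
      refine Nat.le_of_mul_le_mul_left ?_ hpos
      rw [hs]
      exact Nat.mul_le_mul_right _ hc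
  have hdn : ∀ d, w + d ≤ N → binTerm N w (w + d) ≤ binTerm N w w := by
    intro d
    induction d with
    | zero => intro _; simp
    | succ d ih =>
      intro hd
      refine le_trans ?_ (ih (by omega))
      have hs := binTerm_step N w (w + d) (by omega)
      have hc : (N - (w + d)) * w ≤ (w + d + 1) * (N - w) := by
        rw [Nat.mul_comm (w + d + 1)]
        exact Nat.mul_le_mul (by omega) (by omega)
      have hpos : 0 < (w + d + 1) * (N - w) := Nat.mul_pos (by omega) (by omega)
      refine Nat.le_of_mul_le_mul_left ?_ hpos
      rw [← add_assoc, hs]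
      exact Nat.mul_le_mul_right _ hc
  rcases le_total j w with h | h
  · have := hup (w - j) (by omega)
    rwa [Nat.sub_sub_self h] at this
  · have := hdn (j - w) (by omega)
    rwa [Nat.add_sub_cancel' h] at this

theorem pow_le_binTerm (N w : ℕ) (hw : w ≤ N) : N ^ N ≤ (N + 1) * binTerm N w w := by
  have h : N ^ N = ∑ j ∈ range (N + 1), binTerm N w j := by
    have := add_pow w (N - w) N
    rw [Nat.add_sub_cancel' hw] at this
    rw [this]
    refine Finset.sum_congr rfl fun j _ => ?_
    simp [binTerm]; ring
  rw [h]
  calc _ ≤ ∑ j ∈ range (N + 1), binTerm N w w :=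
        Finset.sum_le_sum fun j hj => binTerm_le N w j hw (by simpa [Nat.lt_succ_iff] using hj)
    _ = _ := by simp

/-- The mode of the binomial distribution carries at least the fraction `1 / (N + 1)` of the mass. -/
theorem choose_mul_lower (N w : ℕ) (hw : w ≤ N) (hN : 0 < N) :
    1 ≤ ((N : ℝ) + 1) * (N.choose w * ((w : ℝ) / N) ^ w * (1 - (w : ℝ) / N) ^ (N - w)) := by
  have h : ((N ^ N : ℕ) : ℝ) ≤ (((N + 1) * binTerm N w w : ℕ) : ℝ) :=
    Nat.cast_le.2 (pow_le_binTerm N w hw)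
  unfold binTerm at h
  push_cast [Nat.cast_sub hw] at h
  have hN' : (0 : ℝ) < N := by exact_mod_cast hN
  have e : (1 - (w : ℝ) / N) = (N - w) / N := by field_simp
  rw [e, div_pow, div_pow]
  have e2 : (N : ℝ) ^ N = N ^ w * N ^ (N - w) := by rw [← pow_add]; congr 1; omega
  have e3 : ((N : ℝ) + 1) * (N.choose w * ((w : ℝ) ^ w / N ^ w) * ((N - w) ^ (N - w) / N ^ (N - w)))
      = (((N : ℝ) + 1) * (N.choose w * (w : ℝ) ^ w * (N - w) ^ (N - w))) / N ^ N := by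
    rw [e2]; field_simp
  rw [e3, le_div_iff₀ (by positivity)]
  linarith

theorem choose_mul_upper (N w : ℕ) (hw : w ≤ N) (a : ℝ) (ha : 0 ≤ a) (ha1 : a ≤ 1) :
    N.choose w * a ^ w * (1 - a) ^ (N - w) ≤ 1 := by
  have := add_pow a (1 - a) N
  rw [add_sub_cancel, one_pow] at this
  have h1 : 0 ≤ 1 - a := by linarith
  refine le_of_le_of_eq ?_ this.symm
  calc _ = a ^ w * (1 - a) ^ (N - w) * N.choose w := by ring
    _ ≤ _ := Finset.single_le_sum (f := fun m => a ^ m * (1 - a) ^ (N - m) * (N.choose m : ℝ))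
        (fun i _ => by positivity) (by simp; omega)

/-- For `a = w / N`, `a ^ w (1 - a) ^ (N - w)` is `exp (-N H(a))`. -/
theorem exp_entropy (N w : ℕ) (hw : w ≤ N) (hN : 0 < N) :
    ((w : ℝ) / N) ^ w * (1 - (w : ℝ) / N) ^ (N - w)
      = Real.exp (-(N * Real.binEntropy ((w : ℝ) / N))) := by
  have hN' : (0 : ℝ) < N := by exact_mod_cast hN
  rcases Nat.eq_zero_or_pos w with rfl | h0
  · simp
  rcases hw.lt_or_eq with h1 | h1
  swap
  · subst h1; simp [div_self hN'.ne']
  have hw' : (0 : ℝ) < w := by exact_mod_cast h0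
  have hlt : (w : ℝ) < N := by exact_mod_cast h1
  have ha : 0 < (w : ℝ) / N := by positivity
  have hb : 0 < 1 - (w : ℝ) / N := by rw [sub_pos, div_lt_one hN']; exact hlt
  have e1 : ((w : ℝ) / N) ^ w = Real.exp (w * Real.log ((w : ℝ) / N)) := by
    rw [Real.exp_nat_mul, Real.exp_log ha]
  have e2 : (1 - (w : ℝ) / N) ^ (N - w) = Real.exp (((N - w : ℕ) : ℝ) * Real.log (1 - (w : ℝ) / N)) := by
    rw [Real.exp_nat_mul, Real.exp_log hb]
  rw [e1, e2, ← Real.exp_add]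
  congr 1
  rw [Real.binEntropy, Real.log_inv, Real.log_inv, Nat.cast_sub hw]
  field_simp
  ring

/-- A quadratic upper bound on the entropy. It follows from concavity of the logarithm, which gives
`H(x) ≤ 2 log (√x + √(1 - x))`. -/
theorem entropy_le (x : ℝ) (h0 : 0 ≤ x) (h1 : x ≤ 1) :
    Real.binEntropy x ≤ Real.log 2 - (1 - 2 * x) ^ 2 / 4 := by
  have hl2 : (0.6931471803 : ℝ) < Real.log 2 := Real.log_two_gt_d9
  rcases h0.eq_or_lt with rfl | h0
  · simp; linarith
  rcases h1.eq_or_lt with rfl | h1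
  · norm_num; linarith
  set p := √x with hp
  set q := √(1 - x) with hq
  have hp0 : 0 < p := Real.sqrt_pos.2 h0
  have hq0 : 0 < q := Real.sqrt_pos.2 (by linarith)
  have hp2 : p ^ 2 = x := Real.sq_sqrt h0.le
  have hq2 : q ^ 2 = 1 - x := Real.sq_sqrt (by linarith)
  set y := p + q with hy
  have hy0 : 0 < y := by positivity
  have key : ∀ r : ℝ, 0 < r → -Real.log (r ^ 2) ≤ 2 * Real.log y + 2 * (1 / (r * y) - 1) := by
    intro r hr
    have := Real.log_le_sub_one_of_pos (x := 1 / (r * y)) (by positivity)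
    rw [Real.log_div one_ne_zero (by positivity), Real.log_mul hr.ne' hy0.ne', Real.log_one] at this
    rw [Real.log_pow]; push_cast; linarith
  have k1 := key p hp0
  have k2 := key q hq0
  rw [hp2] at k1
  rw [hq2] at k2
  have hH : Real.binEntropy x ≤ 2 * Real.log y := by
    rw [Real.binEntropy, Real.log_inv, Real.log_inv]
    have m1 := mul_le_mul_of_nonneg_left k1 h0.le
    have m2 := mul_le_mul_of_nonneg_left k2 (by linarith : (0:ℝ) ≤ 1 - x)
    have e : x * (2 * (1 / (p * y) - 1)) + (1 - x) * (2 * (1 / (q * y) - 1)) = 0 := by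
      rw [← hq2, ← hp2]
      have : p ^ 2 + q ^ 2 = 1 := by rw [hp2, hq2]; ring
      field_simp
      rw [hy]
      linear_combination (-2 * p - 2 * q) * this
    linarith
  have hy2 : y ^ 2 ≤ 2 * Real.exp (-((1 - 2 * x) ^ 2 / 4)) := by
    have h3 : y ^ 2 = 1 + 2 * (p * q) := by rw [hy]; linarith [show (p+q)^2 = p^2+q^2+2*(p*q) by ring]
    have h4 : (p * q) ^ 2 = x * (1 - x) := by rw [mul_pow, hp2, hq2]
    have h5 : 2 * (p * q) ≤ 1 - (1 - 2 * x) ^ 2 / 2 := by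
      have hnn : 0 ≤ 1 - (1 - 2 * x) ^ 2 / 2 := by nlinarith
      refine le_of_sq_le_sq ?_ hnn
      have : (2 * (p * q)) ^ 2 = 4 * (x * (1 - x)) := by rw [← h4]; ring
      rw [this]; nlinarith [sq_nonneg ((1 - 2 * x) ^ 2)]
    have h6 := Real.add_one_le_exp (-((1 - 2 * x) ^ 2 / 4))
    linarith
  have := Real.log_le_log (by positivity) hy2
  rw [Real.log_pow, Real.log_mul (by norm_num) (Real.exp_pos _).ne', Real.log_exp] at this
  push_cast at this
  linarith

theorem choose_mul_exp_le (n w : ℕ) (hw : w ≤ n) (hn : 0 < n) :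
    n.choose w * Real.exp (n * ((1 - 2 * ((w : ℝ) / n)) ^ 2 / 4)) ≤ 2 ^ n := by
  have hn' : (0 : ℝ) < n := by exact_mod_cast hn
  have ha0 : 0 ≤ (w : ℝ) / n := by positivity
  have ha1 : (w : ℝ) / n ≤ 1 := by rw [div_le_one hn']; exact_mod_cast hw
  have h1 := choose_mul_upper n w hw _ ha0 ha1
  rw [mul_assoc, exp_entropy n w hw hn] at h1
  have h2 := entropy_le _ ha0 ha1
  have h3 : (2 : ℝ) ^ n = Real.exp (n * Real.log 2) := by
    rw [Real.exp_nat_mul, Real.exp_log (by norm_num)]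
  set H := Real.binEntropy ((w : ℝ) / n)
  set v := (1 - 2 * ((w : ℝ) / n)) ^ 2 / 4
  have h4 : (n.choose w : ℝ) ≤ Real.exp (n * H) := by
    calc (n.choose w : ℝ) = n.choose w * Real.exp (-(n * H)) * Real.exp (n * H) := by
          rw [mul_assoc, ← Real.exp_add]; simp
      _ ≤ 1 * Real.exp (n * H) := by gcongr
      _ = _ := one_mul _
  calc _ ≤ Real.exp (n * H) * Real.exp (n * v) := by gcongr
    _ ≤ _ := by
      rw [h3, ← Real.exp_add, Real.exp_le_exp, ← mul_add]
      exact mul_le_mul_of_nonneg_left (by linarith) hn'.le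

/-! ### Labellings and socket assignments -/

/-- The nontrivial additive character of `ZMod 2`, with real values. -/
def chi (x : ZMod 2) : ℝ := if x = 0 then 1 else -1

theorem zmod2_cases (x : ZMod 2) : x = 0 ∨ x = 1 := by
  revert x; decide

theorem chi_zero : chi 0 = 1 := by simp [chi]
theorem chi_one : chi 1 = -1 := by simp [chi]

theorem chi_add (x y : ZMod 2) : chi (x + y) = chi x * chi y := by
  rcases zmod2_cases x with rfl | rfl <;> rcases zmod2_cases y with rfl | rfl
  · simp [chi]
  · simp [chi]
  · simp [chi]
  · rw [show (1 + 1 : ZMod 2) = 0 by decide]; simp [chi]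

theorem chi_sum {ι : Type*} (s : Finset ι) (y : ι → ZMod 2) :
    chi (∑ i ∈ s, y i) = ∏ i ∈ s, chi (y i) := by
  induction s using Finset.induction_on with
  | empty => simp [chi]
  | insert a s ha ih => rw [Finset.sum_insert ha, Finset.prod_insert ha, chi_add, ih]

theorem sum_zmod2 (g : ZMod 2 → ℝ) : ∑ x, g x = g 0 + g 1 := Fin.sum_univ_two g

theorem card_weight {ι : Type*} [Fintype ι] (v : ℕ) :
    #{y : ι → ZMod 2 | hammingNorm y = v} = (Fintype.card ι).choose v := by
  rw [← Finset.card_univ, ← Finset.card_powersetCard]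
  refine Finset.card_nbij' (fun y => univ.filter (fun i => y i ≠ 0))
    (fun s i => if i ∈ s then 1 else 0) ?_ ?_ ?_ ?_
  · intro y hy
    simp only [Finset.coe_filter, Finset.mem_univ, true_and, Set.mem_ofPred_eq] at hy
    simp only [Finset.mem_coe, Finset.mem_powersetCard]
    exact ⟨Finset.subset_univ _, by rw [← hy, hammingNorm]⟩
  · intro s hs
    simp only [Finset.mem_coe, Finset.mem_powersetCard] at hs
    simp [hammingNorm, hs.2]
  · intro y _
    funext i
    rcases zmod2_cases (y i) with h | h <;> simp [h]
  · intro s _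
    ext i; simp

theorem prod_weight {ι : Type*} [Fintype ι] (a b : ℝ) (y : ι → ZMod 2) :
    ∏ i, (if y i = 0 then b else a)
      = a ^ hammingNorm y * b ^ (Fintype.card ι - hammingNorm y) := by
  rw [Finset.prod_ite, Finset.prod_const, Finset.prod_const, mul_comm]
  have h := Finset.card_filter_add_card_filter_not (s := (univ : Finset ι)) (fun i => y i = 0)
  rw [Finset.card_univ] at h
  have h2 : hammingNorm y = #{i | ¬ y i = 0} := rfl
  rw [h2, ← h, Nat.add_sub_cancel]

/-- Even-weight generating function of a single row of `d` sockets. -/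
theorem row_gf (d : ℕ) (a b : ℝ) :
    ∑ y : Fin d → ZMod 2, ((1 + chi (∑ i, y i)) / 2) * ∏ i, (if y i = 0 then b else a)
      = ((b + a) ^ d + (b - a) ^ d) / 2 := by
  have h1 : ∑ y : Fin d → ZMod 2, ∏ i, (if y i = 0 then b else a) = (b + a) ^ d := by
    rw [← Fintype.prod_sum (fun (_ : Fin d) (x : ZMod 2) => if x = 0 then b else a)]
    simp [sum_zmod2]
  have h2 : ∑ y : Fin d → ZMod 2, chi (∑ i, y i) * ∏ i, (if y i = 0 then b else a)
      = (b - a) ^ d := by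
    have : ∀ y : Fin d → ZMod 2, chi (∑ i, y i) * ∏ i, (if y i = 0 then b else a)
        = ∏ i, chi (y i) * (if y i = 0 then b else a) := by
      intro y; rw [chi_sum, Finset.prod_mul_distrib]
    simp_rw [this]
    rw [← Fintype.prod_sum (fun (_ : Fin d) (x : ZMod 2) => chi x * if x = 0 then b else a)]
    simp [sum_zmod2, chi, sub_eq_add_neg]
  rw [← h1, ← h2, ← Finset.sum_add_distrib, Finset.sum_div]
  refine Finset.sum_congr rfl fun y _ => ?_
  ring

/-- Every row of the socket labelling `y` has even weight. -/
def RowsEven {k d : ℕ} (y : Fin k × Fin d → ZMod 2) : Prop := ∀ i, ∑ c, y (i, c) = 0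

/-- Chernoff-type count of the socket labellings of weight `v` all of whose rows are even. -/
theorem card_even_rows_le (k d v : ℕ) (a b : ℝ) (ha : 0 ≤ a) (hb : 0 ≤ b) :
    (#{y : Fin k × Fin d → ZMod 2 | RowsEven y ∧ hammingNorm y = v} : ℝ)
      * (a ^ v * b ^ (k * d - v)) ≤ (((b + a) ^ d + (b - a) ^ d) / 2) ^ k := by
  have h1 : (((b + a) ^ d + (b - a) ^ d) / 2) ^ k
      = ∑ y : Fin k × Fin d → ZMod 2,
        ∏ i, (((1 + chi (∑ c, y (i, c))) / 2) * ∏ c, (if y (i, c) = 0 then b else a)) := by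
    rw [← row_gf]
    have := Fintype.prod_sum (fun (_ : Fin k) (y : Fin d → ZMod 2) =>
      ((1 + chi (∑ i, y i)) / 2) * ∏ i, (if y i = 0 then b else a))
    rw [Finset.prod_const, Finset.card_univ, Fintype.card_fin] at this
    rw [this]
    exact (Fintype.sum_equiv (Equiv.curry (Fin k) (Fin d) (ZMod 2)) _ _ (fun y => rfl)).symm
  rw [h1, ← nsmul_eq_mul]
  have hfac : ∀ x : ZMod 2, 0 ≤ (1 + chi x) / 2 := by
    intro x; rcases zmod2_cases x with rfl | rfl <;> simp [chi]
  have hnn : ∀ y : Fin k × Fin d → ZMod 2, 0 ≤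
      ∏ i, (((1 + chi (∑ c, y (i, c))) / 2) * ∏ c, (if y (i, c) = 0 then b else a)) := by
    intro y
    refine Finset.prod_nonneg fun i _ => mul_nonneg (hfac _) (Finset.prod_nonneg fun c _ => ?_)
    split_ifs <;> assumption
  refine le_trans (Finset.card_nsmul_le_sum _ _ _ fun y hy => ?_)
    (Finset.sum_le_univ_sum_of_nonneg hnn)
  simp only [Finset.mem_filter, Finset.mem_univ, true_and] at hy
  have h2 : ∀ i, (1 + chi (∑ c, y (i, c))) / 2 = 1 := by
    intro i; rw [hy.1 i, chi_zero]; norm_num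
  simp only [h2, one_mul]
  rw [← Fintype.prod_prod_type' (fun i c => if y (i, c) = 0 then b else a)]
  have := prod_weight a b y
  rw [hy.2, Fintype.card_prod, Fintype.card_fin, Fintype.card_fin] at this
  rw [← this]

/-- Socket assignments: maps from row sockets to columns such that every column is hit exactly
`dv` times. -/
def Assign (σ : Type*) [Fintype σ] (n dv : ℕ) : Finset (σ → Fin n) :=
  univ.filter fun f => ∀ j, #{s | f s = j} = dv

theorem mem_Assign {σ : Type*} [Fintype σ] {n dv : ℕ} {f : σ → Fin n} :
    f ∈ Assign σ n dv ↔ ∀ j, #{s | f s = j} = dv := by simp [Assign]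

theorem Assign_comp {σ : Type*} [Fintype σ] {n dv : ℕ} {f : σ → Fin n} (π : Equiv.Perm σ)
    (hf : f ∈ Assign σ n dv) : f ∘ π ∈ Assign σ n dv := by
  rw [mem_Assign] at hf ⊢
  intro j
  rw [← hf j]
  refine Finset.card_nbij' π π.symm ?_ ?_ ?_ ?_ <;> intro x <;> simp

theorem Assign_comp_iff {σ : Type*} [Fintype σ] {n dv : ℕ} {f : σ → Fin n} (π : Equiv.Perm σ) :
    f ∘ π ∈ Assign σ n dv ↔ f ∈ Assign σ n dv := by
  refine ⟨fun h => ?_, Assign_comp π⟩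
  have := Assign_comp π.symm h
  rwa [Function.comp_assoc, Equiv.self_comp_symm, Function.comp_id] at this

/-- Precomposition with a permutation of the sockets, as a bijection on assignments. -/
theorem card_Assign_perm {σ : Type*} [Fintype σ] {n dv : ℕ} (π : Equiv.Perm σ)
    (P Q : (σ → Fin n) → Prop) [DecidablePred P] [DecidablePred Q] (h : ∀ f, P f ↔ Q (f ∘ π)) :
    #{f ∈ Assign σ n dv | P f} = #{f ∈ Assign σ n dv | Q f} := by
  refine Finset.card_nbij' (fun f => f ∘ π) (fun f => f ∘ π.symm) ?_ ?_ ?_ ?_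
  · intro f hf
    simp only [Finset.coe_filter, Set.mem_ofPred_eq] at hf ⊢
    exact ⟨Assign_comp π hf.1, (h f).1 hf.2⟩
  · intro f hf
    simp only [Finset.coe_filter, Set.mem_ofPred_eq] at hf ⊢
    refine ⟨Assign_comp π.symm hf.1, (h _).2 ?_⟩
    rw [Function.comp_assoc, Equiv.symm_comp_self, Function.comp_id]; exact hf.2
  · intro f _
    simp [Function.comp_assoc]
  · intro f _
    simp [Function.comp_assoc]

theorem hammingNorm_comp_Assign {σ : Type*} [Fintype σ] {n dv : ℕ} {f : σ → Fin n}
    (hf : f ∈ Assign σ n dv) (z : Fin n → ZMod 2) :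
    hammingNorm (z ∘ f) = hammingNorm z * dv := by
  rw [mem_Assign] at hf
  have h1 : hammingNorm (z ∘ f) = #{s | z (f s) ≠ 0} := rfl
  have h2 : hammingNorm z = #{j | z j ≠ 0} := rfl
  rw [h1, h2, Finset.card_eq_sum_card_fiberwise (f := f) (t := univ.filter fun j => z j ≠ 0)]
  · rw [← smul_eq_mul, ← Finset.sum_const]
    refine Finset.sum_congr rfl fun j hj => ?_
    rw [← hf j]
    simp only [Finset.mem_filter, Finset.mem_univ, true_and] at hj
    congr 1
    ext s
    simp only [Finset.mem_filter, Finset.mem_univ, true_and]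
    constructor
    · exact fun h => h.2
    · rintro rfl; exact ⟨hj, rfl⟩
  · intro s hs; simpa using hs

theorem exists_perm_of_weight {σ : Type*} [Fintype σ] (y y' : σ → ZMod 2)
    (h : hammingNorm y = hammingNorm y') : ∃ π : Equiv.Perm σ, y ∘ π = y' := by
  have h1 : hammingNorm y = #{s | y s ≠ 0} := rfl
  have h2 : hammingNorm y' = #{s | y' s ≠ 0} := rfl
  have hc : Fintype.card {s // y' s ≠ 0} = Fintype.card {s // y s ≠ 0} := by
    rw [Fintype.card_subtype, Fintype.card_subtype, ← h1, ← h2, h]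
  let e : {s // y' s ≠ 0} ≃ {s // y s ≠ 0} := Fintype.equivOfCardEq hc
  refine ⟨e.extendSubtype, ?_⟩
  funext s
  by_cases hs : y' s ≠ 0
  · have := e.extendSubtype_mem s hs
    simp only [Function.comp]
    rcases zmod2_cases (y' s) with h | h
    · exact absurd h hs
    · rcases zmod2_cases (y (e.extendSubtype s)) with h' | h'
      · exact absurd h' this
      · rw [h, h']
  · have := e.extendSubtype_not_mem s hs
    push Not at hs this
    simp [hs, this]

/-- The set of sockets attached to the support of `z` is uniform among the sets of its size. -/
theorem card_Assign_labels {σ : Type*} [Fintype σ] {n dv : ℕ} (z : Fin n → ZMod 2)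
    (Q : (σ → ZMod 2) → Prop) [DecidablePred Q] :
    #{f ∈ Assign σ n dv | Q (z ∘ f)} * (Fintype.card σ).choose (hammingNorm z * dv)
      = #{y : σ → ZMod 2 | Q y ∧ hammingNorm y = hammingNorm z * dv} * #(Assign σ n dv) := by
  set v := hammingNorm z * dv with hv
  have hconst : ∀ y y' : σ → ZMod 2, hammingNorm y = v → hammingNorm y' = v →
      #{f ∈ Assign σ n dv | z ∘ f = y} = #{f ∈ Assign σ n dv | z ∘ f = y'} := by
    intro y y' hy hy'
    obtain ⟨π, hπ⟩ := exists_perm_of_weight y y' (hy.trans hy'.symm)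
    refine card_Assign_perm π _ _ fun f => ?_
    rw [← hπ, ← Function.comp_assoc]
    exact (π.surjective.injective_comp_right.eq_iff).symm
  have hfib : ∀ (R : (σ → ZMod 2) → Prop) [DecidablePred R],
      #{f ∈ Assign σ n dv | R (z ∘ f)} =
        ∑ y ∈ univ.filter (fun y : σ → ZMod 2 => R y ∧ hammingNorm y = v),
          #{f ∈ Assign σ n dv | z ∘ f = y} := by
    intro R _
    rw [Finset.card_eq_sum_card_fiberwise (f := fun f => z ∘ f)
      (t := univ.filter (fun y : σ → ZMod 2 => R y ∧ hammingNorm y = v))]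
    · refine Finset.sum_congr rfl fun y hy => ?_
      simp only [Finset.mem_filter, Finset.mem_univ, true_and] at hy
      rw [Finset.filter_filter]
      congr 1
      ext f
      simp only [Finset.mem_filter]
      constructor
      · exact fun h => ⟨h.1, h.2.2⟩
      · rintro ⟨h, rfl⟩; exact ⟨h, hy.1, rfl⟩
    · intro f hf
      simp only [Finset.coe_filter, Set.mem_ofPred_eq, Finset.mem_univ, true_and] at hf ⊢
      exact ⟨hf.2, hammingNorm_comp_Assign hf.1 z⟩
  by_cases hex : ∃ y0 : σ → ZMod 2, hammingNorm y0 = v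
  · obtain ⟨y0, hy0⟩ := hex
    set M := #{f ∈ Assign σ n dv | z ∘ f = y0} with hM
    have hcard : ∀ (R : (σ → ZMod 2) → Prop) [DecidablePred R], #{f ∈ Assign σ n dv | R (z ∘ f)} =
        #{y : σ → ZMod 2 | R y ∧ hammingNorm y = v} * M := by
      intro R _
      rw [hfib R, ← smul_eq_mul, ← Finset.sum_const]
      refine Finset.sum_congr rfl fun y hy => ?_
      simp only [Finset.mem_filter, Finset.mem_univ, true_and] at hy
      exact hconst y y0 hy.2 hy0
    have hall := hcard (fun _ => True)
    simp only [true_and, Finset.filter_true] at hall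
    rw [card_weight] at hall
    rw [hcard Q, hall]; ring
  · have h1 := hfib Q
    have h2 := hfib (fun _ => True)
    have e : ∀ (R : (σ → ZMod 2) → Prop) [DecidablePred R],
        univ.filter (fun y : σ → ZMod 2 => R y ∧ hammingNorm y = v) = ∅ := by
      intro R _
      ext y; simp only [Finset.mem_filter, Finset.mem_univ, true_and, Finset.notMem_empty, iff_false]
      exact fun h => hex ⟨y, h.2⟩
    rw [e] at h1 h2
    simp only [Finset.filter_true, Finset.sum_empty] at h1 h2
    rw [h1, h2]; simp

/-! ### Simple assignments by switching -/

theorem Assign_nonempty {k d n dv : ℕ} (h : k * d = n * dv) :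
    (Assign (Fin k × Fin d) n dv).Nonempty := by
  let e : Fin k × Fin d ≃ Fin n × Fin dv :=
    finProdFinEquiv.trans ((finCongr h).trans finProdFinEquiv.symm)
  refine ⟨fun s => (e s).1, mem_Assign.2 fun j => ?_⟩
  calc #{s | (e s).1 = j} = #(univ : Finset (Fin dv)) := by
        refine Finset.card_nbij' (fun s => (e s).2) (fun c => e.symm (j, c)) ?_ ?_ ?_ ?_
        · intro s _; simp
        · intro c _; simp
        · intro s hs
          simp only [Finset.coe_filter, Set.mem_ofPred_eq, Finset.mem_univ, true_and] at hs
          rw [Equiv.symm_apply_eq, ← hs]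
        · intro c _; simp
    _ = dv := by simp

/-- Ordered pairs of distinct sockets of one row assigned to the same column. -/
def defectSet {k d n : ℕ} (f : Fin k × Fin d → Fin n) :
    Finset ((Fin k × Fin d) × (Fin k × Fin d)) :=
  univ.filter fun p => p.1 ≠ p.2 ∧ p.1.1 = p.2.1 ∧ f p.1 = f p.2

/-- One switching step: exchanging the values at two suitable sockets removes a defect. -/
theorem exists_switch {k d n dv : ℕ} (hbig : 2 * dv * d < k * d) {f : Fin k × Fin d → Fin n}
    (hf : f ∈ Assign (Fin k × Fin d) n dv) (hd : 0 < #(defectSet f)) :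
    ∃ s s', #(defectSet (f ∘ Equiv.swap s s')) < #(defectSet f) := by
  obtain ⟨⟨s, t⟩, hst⟩ := Finset.card_pos.1 hd
  simp only [defectSet, Finset.mem_filter, Finset.mem_univ, true_and] at hst
  obtain ⟨hne, hrow, hval⟩ := hst
  rw [mem_Assign] at hf
  -- the new socket `s'` must avoid the rows meeting the column of `s` and the columns meeting the
  -- row of `s`; these exclude at most `2 dv d` sockets
  set B1 : Finset (Fin k × Fin d) :=
    (univ : Finset (Fin d)).biUnion fun c => univ.filter fun s' => f s' = f (s.1, c) with hB1
  set B2 : Finset (Fin k × Fin d) :=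
    (univ.filter fun r => f r = f s).biUnion fun r => univ.filter fun s' => s'.1 = r.1 with hB2
  have c1 : #B1 ≤ dv * d := by
    refine Finset.card_biUnion_le.trans ?_
    simp only [hf]; simp [mul_comm]
  have c2 : #B2 ≤ dv * d := by
    refine (Finset.card_biUnion_le_card_mul _ _ d fun r _ => ?_).trans (by rw [hf])
    have : (univ.filter fun s' : Fin k × Fin d => s'.1 = r.1) = {r.1} ×ˢ univ := by
      ext x
      simp only [Finset.mem_filter, Finset.mem_univ, true_and, Finset.mem_product,
        Finset.mem_singleton, and_true]
    rw [this]; simp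
  have hcard : #(B1 ∪ B2) < #(univ : Finset (Fin k × Fin d)) := by
    refine (Finset.card_union_le _ _).trans_lt ?_
    simp only [Finset.card_univ, Fintype.card_prod, Fintype.card_fin]
    nlinarith
  obtain ⟨s', -, hs'⟩ := Finset.exists_mem_notMem_of_card_lt_card hcard
  simp only [hB1, hB2, Finset.mem_union, Finset.mem_biUnion, Finset.mem_filter, Finset.mem_univ,
    true_and, not_or, not_exists, not_and] at hs'
  obtain ⟨g1, g2⟩ := hs'
  have g1' : ∀ v : Fin k × Fin d, v.1 = s.1 → f v ≠ f s' := by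
    intro v hv h
    apply g1 v.2
    rw [← hv, ← h]
  have g2' : ∀ v : Fin k × Fin d, v.1 = s'.1 → f v ≠ f s := fun v hv h => g2 v h hv.symm
  have hrr : s'.1 ≠ s.1 := fun h => g1' s' h rfl
  refine ⟨s, s', Finset.card_lt_card ?_⟩
  have hsub : ∀ u v : Fin k × Fin d, u ≠ v → u.1 = v.1 →
      (f ∘ Equiv.swap s s') u = (f ∘ Equiv.swap s s') v →
      f u = f v ∧ u ≠ s := by
    intro u v huv hrow' hv'
    simp only [Function.comp] at hv'
    by_cases hus : u = s
    · subst hus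
      have h1 : v ≠ s' := by rintro rfl; exact hrr hrow'.symm
      rw [Equiv.swap_apply_left, Equiv.swap_apply_of_ne_of_ne huv.symm h1] at hv'
      exact absurd hv'.symm (g1' v hrow'.symm)
    refine ⟨?_, hus⟩
    by_cases hus' : u = s'
    · subst hus'
      have h1 : v ≠ s := by rintro rfl; exact hrr hrow'
      rw [Equiv.swap_apply_right, Equiv.swap_apply_of_ne_of_ne h1 huv.symm] at hv'
      exact absurd hv'.symm (g2' v hrow'.symm)
    rw [Equiv.swap_apply_of_ne_of_ne hus hus'] at hv'
    by_cases hvs : v = s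
    · subst hvs
      rw [Equiv.swap_apply_left] at hv'
      exact absurd hv' (g1' u hrow')
    by_cases hvs' : v = s'
    · subst hvs'
      rw [Equiv.swap_apply_right] at hv'
      exact absurd hv' (g2' u hrow')
    rwa [Equiv.swap_apply_of_ne_of_ne hvs hvs'] at hv'
  rw [Finset.ssubset_iff_of_subset]
  · refine ⟨(s, t), by simp [defectSet, hne, hrow, hval], fun h => ?_⟩
    simp only [defectSet, Finset.mem_filter, Finset.mem_univ, true_and] at h
    exact (hsub s t h.1 h.2.1 h.2.2).2 rfl
  · rintro ⟨u, v⟩ h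
    simp only [defectSet, Finset.mem_filter, Finset.mem_univ, true_and] at h ⊢
    exact ⟨h.1, h.2.1, (hsub u v h.1 h.2.1 h.2.2).1⟩

/-- A map with at most `m` defects is reached from a defect-free one by at most `m` transpositions of
sockets. -/
theorem card_few_defects {k d n dv : ℕ} (hbig : 2 * dv * d < k * d) (m : ℕ) :
    #{f ∈ Assign (Fin k × Fin d) n dv | #(defectSet f) ≤ m}
      ≤ (k * d) ^ (2 * m) * #{f ∈ Assign (Fin k × Fin d) n dv | #(defectSet f) = 0} := by
  induction m with
  | zero => simp
  | succ m ih =>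
    have hsub : ({f ∈ Assign (Fin k × Fin d) n dv | #(defectSet f) ≤ m + 1}) ⊆
        Finset.image (fun p : (Fin k × Fin d → Fin n) × (Fin k × Fin d) × (Fin k × Fin d) =>
            p.1 ∘ Equiv.swap p.2.1 p.2.2)
          (({f ∈ Assign (Fin k × Fin d) n dv | #(defectSet f) ≤ m}) ×ˢ univ) := by
      intro f hf
      simp only [Finset.mem_filter] at hf
      have hN : 0 < k * d := by omega
      have : ∃ s s' : Fin k × Fin d, #(defectSet (f ∘ Equiv.swap s s')) ≤ m := by
        by_cases h0 : #(defectSet f) = 0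
        · have hk : 0 < k := Nat.pos_of_mul_pos_right hN
          have hd : 0 < d := Nat.pos_of_mul_pos_left hN
          refine ⟨(⟨0, hk⟩, ⟨0, hd⟩), (⟨0, hk⟩, ⟨0, hd⟩), ?_⟩
          simp [h0]
        · obtain ⟨s, s', h⟩ := exists_switch hbig hf.1 (Nat.pos_of_ne_zero h0)
          exact ⟨s, s', by omega⟩
      obtain ⟨s, s', h⟩ := this
      refine Finset.mem_image.2 ⟨(f ∘ Equiv.swap s s', s, s'), ?_, ?_⟩
      · simp only [Finset.mem_product, Finset.mem_filter, Finset.mem_univ, and_true]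
        exact ⟨Assign_comp _ hf.1, h⟩
      · funext x; simp
    refine (Finset.card_le_card hsub).trans (Finset.card_image_le.trans ?_)
    rw [Finset.card_product, Finset.card_univ, Fintype.card_prod, Fintype.card_prod,
      Fintype.card_fin, Fintype.card_fin]
    calc _ ≤ ((k * d) ^ (2 * m) * #{f ∈ Assign (Fin k × Fin d) n dv | #(defectSet f) = 0}) *
          (k * d * (k * d)) := Nat.mul_le_mul_right _ ih
      _ = _ := by ring

theorem exists_simple {k d n dv : ℕ} (h : k * d = n * dv) (hbig : 2 * dv * d < k * d) :
    ∃ f ∈ Assign (Fin k × Fin d) n dv, #(defectSet f) = 0 := by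
  obtain ⟨f, hf⟩ := Assign_nonempty h
  have h1 := card_few_defects (n := n) hbig (#(defectSet f))
  have h2 : 0 < #{g ∈ Assign (Fin k × Fin d) n dv | #(defectSet g) ≤ #(defectSet f)} :=
    Finset.card_pos.2 ⟨f, by simp [hf]⟩
  have h3 := Nat.pos_of_mul_pos_left (h2.trans_le h1)
  obtain ⟨g, hg⟩ := Finset.card_pos.1 h3
  simp only [Finset.mem_filter] at hg
  exact ⟨g, hg.1, hg.2⟩

/-- The probability that two given sockets share a column is at most `dv / (N - 1)`. -/
theorem card_collision {σ : Type*} [Fintype σ] {n dv : ℕ} (s t : σ) (hst : s ≠ t) :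
    (Fintype.card σ - 1) * #{f ∈ Assign σ n dv | f s = f t} ≤ dv * #(Assign σ n dv) := by
  have hsym : ∀ t' ∈ (univ : Finset σ).erase s, #{f ∈ Assign σ n dv | f s = f t}
      = #{f ∈ Assign σ n dv | f s = f t'} := by
    intro t' ht'
    have ht's : t' ≠ s := Finset.ne_of_mem_erase ht'
    refine card_Assign_perm (Equiv.swap t t') _ _ fun f => ?_
    simp [Equiv.swap_apply_of_ne_of_ne hst ht's.symm]
  have h1 : (Fintype.card σ - 1) * #{f ∈ Assign σ n dv | f s = f t}
      = ∑ t' ∈ (univ : Finset σ).erase s, #{f ∈ Assign σ n dv | f s = f t'} := by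
    rw [← Finset.sum_congr rfl hsym, Finset.sum_const, Finset.card_erase_of_mem (Finset.mem_univ _),
      Finset.card_univ, smul_eq_mul]
  rw [h1]
  simp only [Finset.card_filter]
  rw [Finset.sum_comm]
  calc _ ≤ ∑ f ∈ Assign σ n dv, dv := by
        refine Finset.sum_le_sum fun f hf => ?_
        rw [← Finset.card_filter, ← (mem_Assign.1 hf) (f s)]
        refine Finset.card_le_card fun x hx => ?_
        simp only [Finset.mem_filter, Finset.mem_univ, true_and] at hx ⊢
        exact hx.2.symm
    _ = _ := by simp [mul_comm]

/-- The expected number of defects of a random assignment is at most `2 dv d`. -/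
theorem sum_defects {k d n dv : ℕ} (hN : 2 ≤ k * d) :
    ∑ f ∈ Assign (Fin k × Fin d) n dv, #(defectSet f)
      ≤ 2 * dv * d * #(Assign (Fin k × Fin d) n dv) := by
  set F := Assign (Fin k × Fin d) n dv with hF
  set P : Finset ((Fin k × Fin d) × (Fin k × Fin d)) :=
    univ.filter fun p => p.1 ≠ p.2 ∧ p.1.1 = p.2.1 with hP
  have hPc : #P ≤ k * d * d := by
    calc #P ≤ #(univ : Finset ((Fin k × Fin d) × Fin d)) := by
          refine Finset.card_le_card_of_injOn (fun p => (p.1, p.2.2)) (fun _ _ => by simp) ?_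
          rintro ⟨⟨i, a⟩, ⟨j, b⟩⟩ h ⟨⟨i', a'⟩, ⟨j', b'⟩⟩ h' hh
          simp [hP] at h h' hh ⊢
          obtain ⟨⟨rfl, rfl⟩, rfl⟩ := hh
          refine ⟨⟨rfl, rfl⟩, ?_, rfl⟩
          rw [← h.2, ← h'.2]
      _ = _ := by simp
  have h1 : ∑ f ∈ F, #(defectSet f) = ∑ p ∈ P, #{f ∈ F | f p.1 = f p.2} := by
    simp only [Finset.card_filter]
    rw [Finset.sum_comm]
    refine Finset.sum_congr rfl fun f _ => ?_
    rw [← Finset.card_filter, hP, Finset.filter_filter, defectSet]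
    congr 1
    ext p; simp [and_assoc]
  have h2 : (k * d - 1) * ∑ f ∈ F, #(defectSet f) ≤ k * d * d * (dv * #F) := by
    rw [h1, Finset.mul_sum]
    calc _ ≤ ∑ p ∈ P, dv * #F := by
          refine Finset.sum_le_sum fun p hp => ?_
          simp only [hP, Finset.mem_filter, Finset.mem_univ, true_and] at hp
          have := card_collision (n := n) (dv := dv) p.1 p.2 hp.1
          simpa using this
      _ ≤ _ := by
          rw [Finset.sum_const, smul_eq_mul]
          exact Nat.mul_le_mul_right _ hPc
  have h3 : k * d ≤ 2 * (k * d - 1) := by omega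
  have h4 : 0 < k * d - 1 := by omega
  refine Nat.le_of_mul_le_mul_left (h2.trans ?_) h4
  calc _ ≤ 2 * (k * d - 1) * d * (dv * #F) := by gcongr
    _ = _ := by ring

/-- Defect-free assignments make up at least a polynomially small fraction of all assignments: by Markov's
inequality half of them have at most `4 dv d` defects. -/
theorem card_Assign_le_simple {k d n dv : ℕ} (hN : 2 ≤ k * d) (hbig : 2 * dv * d < k * d)
    (hpos : 0 < dv * d) :
    #(Assign (Fin k × Fin d) n dv) ≤ 2 * ((k * d) ^ (2 * (4 * dv * d)) *
      #{f ∈ Assign (Fin k × Fin d) n dv | #(defectSet f) = 0}) := by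
  set F := Assign (Fin k × Fin d) n dv with hF
  have h1 := sum_defects (n := n) (dv := dv) hN
  rw [← hF] at h1
  have h2 := card_few_defects (n := n) hbig (4 * dv * d)
  rw [← hF] at h2
  have h3 : (4 * dv * d) * #{f ∈ F | ¬ #(defectSet f) ≤ 4 * dv * d} ≤ ∑ f ∈ F, #(defectSet f) := by
    rw [mul_comm, ← smul_eq_mul]
    refine (Finset.card_nsmul_le_sum _ (fun f => #(defectSet f)) _ fun f hf => ?_).trans
      (Finset.sum_le_sum_of_subset (Finset.filter_subset _ _))
    simp only [Finset.mem_filter] at hf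
    omega
  have h4 := Finset.card_filter_add_card_filter_not (s := F) (fun f => #(defectSet f) ≤ 4 * dv * d)
  have h5 : 2 * #{f ∈ F | ¬ #(defectSet f) ≤ 4 * dv * d} ≤ #F := by
    refine Nat.le_of_mul_le_mul_left ?_ (Nat.mul_pos two_pos hpos)
    calc _ = (4 * dv * d) * #{f ∈ F | ¬ #(defectSet f) ≤ 4 * dv * d} := by ring
      _ ≤ _ := h3.trans h1
      _ = _ := by ring
  omega

/-! ### The regular LDPC ensemble -/

/-- The 0/1 incidence matrix of a socket assignment. -/
def assignMat {k d n : ℕ} (f : Fin k × Fin d → Fin n) : Matrix (Fin k) (Fin n) (ZMod 2) :=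
  fun i j => if ∃ c, f (i, c) = j then 1 else 0

theorem assignMat_eq_one {k d n : ℕ} (f : Fin k × Fin d → Fin n) (i : Fin k) (j : Fin n) :
    assignMat f i j = 1 ↔ ∃ c, f (i, c) = j := by
  unfold assignMat; split_ifs with h <;> simp [h]

theorem simple_iff {k d n : ℕ} (f : Fin k × Fin d → Fin n) :
    #(defectSet f) = 0 ↔ ∀ i, Function.Injective fun c => f (i, c) := by
  rw [Finset.card_eq_zero, defectSet, Finset.filter_eq_empty_iff]
  constructor
  · intro h i a b hab
    by_contra hne
    exact @h ((i, a), (i, b)) (Finset.mem_univ _) ⟨by simpa using hne, rfl, hab⟩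
  · rintro h ⟨⟨i, a⟩, ⟨j, b⟩⟩ - ⟨h1, h2, h3⟩
    dsimp only at h2 h3
    subst h2
    exact h1 (by rw [h i h3])

theorem regular_assignMat {k d n dv : ℕ} {f : Fin k × Fin d → Fin n}
    (hf : f ∈ Assign (Fin k × Fin d) n dv) (hs : ∀ i, Function.Injective fun c => f (i, c)) :
    regularLDPC dv d (assignMat f) := by
  rw [mem_Assign] at hf
  constructor
  · intro j
    rw [← hf j]
    symm
    refine Finset.card_nbij (fun s => s.1) ?_ ?_ ?_
    · intro s h
      simp only [Finset.coe_filter, Set.mem_ofPred_eq, Finset.mem_univ, true_and,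
        assignMat_eq_one] at h ⊢
      exact ⟨s.2, h⟩
    · rintro ⟨i, a⟩ h ⟨i', a'⟩ h' hh
      simp only [Finset.coe_filter, Set.mem_ofPred_eq, Finset.mem_univ, true_and] at h h' hh
      subst hh
      rw [hs i (h.trans h'.symm)]
    · intro i h
      simp only [Finset.coe_filter, Set.mem_ofPred_eq, Finset.mem_univ, true_and,
        assignMat_eq_one] at h
      obtain ⟨c, hc⟩ := h
      exact ⟨(i, c), by simpa using hc, rfl⟩
  · intro i
    have : (univ.filter fun j => assignMat f i j = 1) = univ.image fun c => f (i, c) := by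
      ext j; simp [assignMat_eq_one]
    rw [this, Finset.card_image_of_injective _ (hs i)]; simp

/-- The syndrome of `z` at check `i` is the sum of the labels of the sockets of row `i`. -/
theorem mulVec_assignMat {k d n : ℕ} {f : Fin k × Fin d → Fin n}
    (hs : ∀ i, Function.Injective fun c => f (i, c)) (z : Fin n → ZMod 2) (i : Fin k) :
    Matrix.mulVec (assignMat f) z i = ∑ c, z (f (i, c)) := by
  have h1 : Matrix.mulVec (assignMat f) z i = ∑ j ∈ univ.image (fun c => f (i, c)), z j := by
    rw [Matrix.mulVec, dotProduct, ← Finset.sum_filter_add_sum_filter_not _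
      (fun j => ∃ c, f (i, c) = j)]
    rw [Finset.sum_eq_zero (s := univ.filter fun j => ¬ ∃ c, f (i, c) = j), add_zero]
    · refine Finset.sum_congr (by ext j; simp) fun j hj => ?_
      have := (assignMat_eq_one f i j).2 (by simpa using hj)
      rw [this, one_mul]
    · intro j hj
      have : assignMat f i j = 0 := by
        unfold assignMat; rw [if_neg]; simpa using hj
      rw [this, zero_mul]
  rw [h1, Finset.sum_image fun a _ b _ h => hs i h]

theorem card_pi_embedding {k d n : ℕ} (p : Fin k → Fin n → Prop)
    (hp : ∀ i, #{j | p i j} = d) :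
    Fintype.card ((i : Fin k) → (Fin d ↪ {j : Fin n // p i j})) = d.factorial ^ k := by
  have : ∀ i, Fintype.card (Fin d ↪ {j : Fin n // p i j}) = d.factorial := by
    intro i
    rw [Fintype.card_embedding_eq, Fintype.card_subtype, Fintype.card_fin, hp i,
      Nat.descFactorial_self]
  rw [Fintype.card_pi, Finset.prod_congr rfl fun i _ => this i, Finset.prod_const,
    Finset.card_univ, Fintype.card_fin]

/-- Simple assignments with a prescribed regular incidence matrix: one ordering of every row. -/
theorem card_assign_fiber {k d n dv : ℕ} (H : Matrix (Fin k) (Fin n) (ZMod 2))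
    (hH : regularLDPC dv d H) :
    #{f ∈ Assign (Fin k × Fin d) n dv | #(defectSet f) = 0 ∧ assignMat f = H}
      = (d.factorial) ^ k := by
  have hset : ∀ f : Fin k × Fin d → Fin n,
      (f ∈ Assign (Fin k × Fin d) n dv ∧ #(defectSet f) = 0 ∧ assignMat f = H) ↔
      ∀ i, (∀ c, H i (f (i, c)) = 1) ∧ Function.Injective fun c => f (i, c) := by
    intro f
    rw [simple_iff]
    constructor
    · rintro ⟨-, h2, rfl⟩ i
      exact ⟨fun c => (assignMat_eq_one f i _).2 ⟨c, rfl⟩, h2 i⟩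
    · intro h
      have himg : ∀ i j, H i j = 1 ↔ ∃ c, f (i, c) = j := by
        intro i
        have : univ.image (fun c => f (i, c)) = univ.filter fun j => H i j = 1 := by
          refine Finset.eq_of_subset_of_card_le ?_ ?_
          · intro j hj
            simp only [Finset.mem_image, Finset.mem_univ, true_and] at hj
            obtain ⟨c, rfl⟩ := hj
            simpa using (h i).1 c
          · rw [hH.2 i, Finset.card_image_of_injective _ (h i).2]; simp
        intro j
        have := congrArg (fun s => j ∈ s) this
        simpa using this.symm
      have hmat : assignMat f = H := by
        funext i j
        unfold assignMat
        split_ifs with hc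
        · exact ((himg i j).2 hc).symm
        · rcases zmod2_cases (H i j) with h0 | h1
          · exact h0.symm
          · exact absurd ((himg i j).1 h1) hc
      refine ⟨mem_Assign.2 fun j => ?_, fun i => (h i).2, hmat⟩
      rw [← hH.1 j]
      refine Finset.card_nbij (fun s => s.1) ?_ ?_ ?_
      · rintro ⟨i, c⟩ hs
        simp only [Finset.coe_filter, Set.mem_ofPred_eq, Finset.mem_univ, true_and] at hs ⊢
        exact (himg i j).2 ⟨c, hs⟩
      · rintro ⟨i, a⟩ h1 ⟨i', a'⟩ h2 hh
        simp only [Finset.coe_filter, Set.mem_ofPred_eq, Finset.mem_univ, true_and] at h1 h2 hh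
        subst hh
        rw [(h i).2 (h1.trans h2.symm)]
      · intro i hi
        simp only [Finset.coe_filter, Set.mem_ofPred_eq, Finset.mem_univ, true_and] at hi
        obtain ⟨c, hc⟩ := (himg i j).1 hi
        exact ⟨(i, c), by simpa using hc, rfl⟩
  have e1 : #{f ∈ Assign (Fin k × Fin d) n dv | #(defectSet f) = 0 ∧ assignMat f = H} =
      Fintype.card {f : Fin k × Fin d → Fin n //
        ∀ i, (∀ c, H i (f (i, c)) = 1) ∧ Function.Injective fun c => f (i, c)} := by
    rw [Fintype.card_subtype]
    congr 1
    ext f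
    rw [Finset.mem_filter, hset f]
    simp
  have e2 : {f : Fin k × Fin d → Fin n //
        ∀ i, (∀ c, H i (f (i, c)) = 1) ∧ Function.Injective fun c => f (i, c)} ≃
      ((i : Fin k) → (Fin d ↪ {j : Fin n // H i j = 1})) :=
    { toFun := fun f i => ⟨fun c => ⟨f.1 (i, c), (f.2 i).1 c⟩, fun a b hab =>
        (f.2 i).2 (Subtype.ext_iff.1 hab)⟩
      invFun := fun g => ⟨fun s => (g s.1 s.2).1, fun i => ⟨fun c => (g i c).2, fun a b hab =>
        (g i).injective (Subtype.ext hab)⟩⟩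
      left_inv := fun f => rfl
      right_inv := fun g => rfl }
  rw [e1, Fintype.card_congr e2]
  exact card_pi_embedding (fun i j => H i j = 1) fun i => by convert hH.2 i

/-- The incidence matrix of a uniform defect-free assignment is uniform on the regular matrices. -/
theorem card_simple_eq {k d n dv : ℕ} (P : Matrix (Fin k) (Fin n) (ZMod 2) → Prop)
    [DecidablePred P] :
    #{f ∈ Assign (Fin k × Fin d) n dv | #(defectSet f) = 0 ∧ P (assignMat f)}
      = #{H : Matrix (Fin k) (Fin n) (ZMod 2) | regularLDPC dv d H ∧ P H} * (d.factorial) ^ k := by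
  rw [Finset.card_eq_sum_card_fiberwise (f := assignMat)
    (t := univ.filter fun H => regularLDPC dv d H ∧ P H)]
  · rw [← smul_eq_mul, ← Finset.sum_const]
    refine Finset.sum_congr rfl fun H hH => ?_
    simp only [Finset.mem_filter, Finset.mem_univ, true_and] at hH
    rw [← card_assign_fiber H hH.1, Finset.filter_filter]
    congr 1
    ext f
    simp only [Finset.mem_filter]
    constructor
    · exact fun h => ⟨h.1, h.2.1.1, h.2.2⟩
    · rintro ⟨h1, h2, rfl⟩; exact ⟨h1, ⟨h2, hH.2⟩, rfl⟩
  · intro f hf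
    simp only [Finset.coe_filter, Set.mem_ofPred_eq, Finset.mem_univ, true_and] at hf ⊢
    exact ⟨regular_assignMat hf.1 ((simple_iff f).1 hf.2.1), hf.2.2⟩

theorem regular_nonempty {k d n dv : ℕ} (h : k * d = n * dv) (hbig : 2 * dv * d < k * d) :
    Nonempty {H : Matrix (Fin k) (Fin n) (ZMod 2) // regularLDPC dv d H} := by
  obtain ⟨f, hf, hs⟩ := exists_simple h hbig
  exact ⟨⟨assignMat f, regular_assignMat hf ((simple_iff f).1 hs)⟩⟩

/-- A fixed word of relative weight `ω` lies in the random regular LDPC code with probability at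
most `poly(n) ((1 + (1 - 2ω)^d) / 2)^k`. -/
theorem prob_codeword_le {k d n dv : ℕ} (h : k * d = n * dv) (hbig : 2 * dv * d < k * d)
    (hpos : 0 < dv * d) (z : Fin n → ZMod 2) :
    (#{H : Matrix (Fin k) (Fin n) (ZMod 2) | regularLDPC dv d H ∧ Matrix.mulVec H z = 0} : ℝ)
      ≤ 2 * ((k * d : ℕ) : ℝ) ^ (2 * (4 * dv * d)) * (((k * d : ℕ) : ℝ) + 1) *
        ((1 + (1 - 2 * ((hammingNorm z : ℝ) / n)) ^ d) / 2) ^ k *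
        #{H : Matrix (Fin k) (Fin n) (ZMod 2) | regularLDPC dv d H} := by
  set N := k * d with hN
  set w := hammingNorm z with hw
  set F := Assign (Fin k × Fin d) n dv with hF
  set X := ((1 + (1 - 2 * ((w : ℝ) / n)) ^ d) / 2) ^ k with hX
  have hdv : 0 < dv := Nat.pos_of_mul_pos_right hpos
  have hN0 : 0 < N := by omega
  have hn0 : 0 < n := Nat.pos_of_mul_pos_right (h ▸ hN0)
  have hwn : w ≤ n := by simpa using (hammingNorm_le_card_fintype (x := z))
  have hn0' : (0 : ℝ) < n := by exact_mod_cast hn0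
  have hdv' : (0 : ℝ) < dv := by exact_mod_cast hdv
  have ha0 : 0 ≤ (w : ℝ) / n := by positivity
  have ha1 : (w : ℝ) / n ≤ 1 := by rw [div_le_one hn0']; exact_mod_cast hwn
  -- assignments under which `z` satisfies every check
  set E := #{f ∈ F | RowsEven (z ∘ f)} with hE
  have h1 : #{H : Matrix (Fin k) (Fin n) (ZMod 2) | regularLDPC dv d H ∧ Matrix.mulVec H z = 0}
      * (d.factorial) ^ k ≤ E := by
    rw [← card_simple_eq (fun H => Matrix.mulVec H z = 0)]
    refine Finset.card_le_card fun f hf => ?_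
    simp only [Finset.mem_filter] at hf ⊢
    refine ⟨hf.1, fun i => ?_⟩
    have := congrFun hf.2.2 i
    rw [mulVec_assignMat ((simple_iff f).1 hf.2.1)] at this
    exact this
  have h2 := card_Assign_labels (σ := Fin k × Fin d) (n := n) (dv := dv) z
    RowsEven
  rw [← hF, ← hE, ← hw, Fintype.card_prod, Fintype.card_fin, Fintype.card_fin, ← hN] at h2
  set Y := #{y : Fin k × Fin d → ZMod 2 | RowsEven y ∧ hammingNorm y = w * dv} with hY
  have h3 := card_even_rows_le k d (w * dv) ((w : ℝ) / n) (1 - (w : ℝ) / n) ha0 (by linarith)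
  rw [← hY, ← hN, sub_add_cancel, one_pow,
    show 1 - (w : ℝ) / n - (w : ℝ) / n = 1 - 2 * ((w : ℝ) / n) by ring, ← hX] at h3
  have hwN : w * dv ≤ N := by rw [h]; exact Nat.mul_le_mul_right _ hwn
  have h4 := choose_mul_lower N (w * dv) hwN hN0
  have hratio : ((w * dv : ℕ) : ℝ) / (N : ℕ) = (w : ℝ) / n := by
    rw [h]; push_cast; field_simp
  rw [hratio] at h4
  set W := ((w : ℝ) / n) ^ (w * dv) * (1 - (w : ℝ) / n) ^ (N - w * dv) with hW
  have h2n : E * N.choose (w * dv) = Y * #F := by convert h2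
  have h2' : (E : ℝ) * (N.choose (w * dv)) = Y * #F := by exact_mod_cast h2n
  have h5 : (E : ℝ) ≤ (N + 1) * X * #F := by
    calc (E : ℝ) = E * 1 := (mul_one _).symm
      _ ≤ E * (((N : ℝ) + 1) * ((N.choose (w * dv)) * ((w : ℝ) / n) ^ (w * dv) *
            (1 - (w : ℝ) / n) ^ (N - w * dv))) := by gcongr
      _ = (N + 1) * ((E : ℝ) * (N.choose (w * dv))) * W := by rw [hW]; ring
      _ = (N + 1) * (Y * W) * #F := by rw [h2']; ring
      _ ≤ (N + 1) * X * #F := by gcongr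
  have h6 := card_Assign_le_simple (n := n) (by nlinarith : 2 ≤ k * d) hbig hpos
  have h7 := card_simple_eq (k := k) (d := d) (n := n) (dv := dv) (fun _ => True)
  simp only [and_true] at h7
  rw [h7, ← hF, ← hN] at h6
  set R := #{H : Matrix (Fin k) (Fin n) (ZMod 2) | regularLDPC dv d H} with hR
  have h6' : (#F : ℝ) ≤ 2 * ((N : ℝ) ^ (2 * (4 * dv * d)) * (R * (d.factorial : ℝ) ^ k)) := by
    exact_mod_cast h6
  have h1' : (#{H : Matrix (Fin k) (Fin n) (ZMod 2) | regularLDPC dv d H ∧ Matrix.mulVec H z = 0} : ℝ)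
      * (d.factorial : ℝ) ^ k ≤ E := by exact_mod_cast h1
  have hX0 : 0 ≤ X := by
    refine pow_nonneg ?_ _
    have : |1 - 2 * ((w : ℝ) / n)| ≤ 1 := by rw [abs_le]; constructor <;> linarith
    have := pow_le_one₀ (n := d) (abs_nonneg _) this
    rw [← abs_pow] at this
    have := (abs_le.1 this).1
    linarith
  have hfac : (0 : ℝ) < (d.factorial : ℝ) ^ k := by
    have := Nat.factorial_pos d
    positivity
  refine le_of_mul_le_mul_right ?_ hfac
  calc _ ≤ (E : ℝ) := h1'
    _ ≤ (N + 1) * X * #F := h5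
    _ ≤ (N + 1) * X * (2 * ((N : ℝ) ^ (2 * (4 * dv * d)) * (R * (d.factorial : ℝ) ^ k))) := by gcongr
    _ = _ := by ring

/-! ### Pairwise statistics of the LDGM ensemble -/

/-- Cardinality of the Hamming ball of radius `r` in `(ZMod 2)^n`. -/
def ballCard (n : ℕ) (r : ℝ) : ℕ := #{S : Fin n → ZMod 2 | (hammingNorm S : ℝ) ≤ r}

theorem card_near (n : ℕ) (r : ℝ) (x : Fin n → ZMod 2) :
    #{S : Fin n → ZMod 2 | (hammingDist x S : ℝ) ≤ r} = ballCard n r := by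
  unfold ballCard
  have h : ∀ S, hammingDist x S = hammingNorm (x - S) := fun S => by
    simp [hammingDist, hammingNorm, sub_ne_zero]
  simp_rw [h]
  refine Finset.card_nbij' (fun S => x - S) (fun S => x - S) ?_ ?_ ?_ ?_ <;> intro S <;> simp

theorem ldgmEnc_sub {m n δ : ℕ} (I : Fin n → Fin δ → Fin m) (z z' : Fin m → ZMod 2) (j : Fin n) :
    ldgmEnc I z j - ldgmEnc I z' j = ∑ i, (z - z') (I j i) := by
  simp [ldgmEnc]

theorem theta_pow_dist {n : ℕ} (θ : ℝ) (x S : Fin n → ZMod 2) :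
    θ ^ hammingDist x S = ∏ j, if x j = S j then 1 else θ := by
  rw [Finset.prod_ite, Finset.prod_const_one, Finset.prod_const, one_mul]
  rfl

/-- Contribution of one code bit to the joint Chernoff sum, averaged over the source bit, in terms of the
character of the difference of the two code bits. -/
theorem sum_pair_weight (θ : ℝ) (x y : ZMod 2) :
    ∑ s, (if x = s then 1 else θ) * (if y = s then 1 else θ)
      = (1 + θ) ^ 2 / 2 + chi (x - y) * ((1 - θ) ^ 2 / 2) := by
  rw [sum_zmod2]
  rcases zmod2_cases x with rfl | rfl <;> rcases zmod2_cases y with rfl | rfl <;>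
    simp [chi] <;> ring

theorem sum_chi {m : ℕ} (y : Fin m → ZMod 2) : ∑ i, chi (y i) = m - 2 * hammingNorm y := by
  have h : ∀ i, chi (y i) = 1 - 2 * (if y i ≠ 0 then 1 else 0) := by
    intro i; unfold chi; split_ifs <;> norm_num <;> contradiction
  simp_rw [h]
  rw [Finset.sum_sub_distrib, ← Finset.mul_sum, Finset.sum_boole]
  simp [hammingNorm]

/-- Average of the LDGM noise character: the bias of a code bit is `(1 - 2ω)^δ`. -/
theorem sum_chi_pow {m δ : ℕ} (y : Fin m → ZMod 2) :
    ∑ ι : Fin δ → Fin m, chi (∑ i, y (ι i)) = ((m : ℝ) - 2 * hammingNorm y) ^ δ := by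
  simp_rw [chi_sum]
  rw [← Fintype.prod_sum (fun (_ : Fin δ) (i : Fin m) => chi (y i)), Finset.prod_const, sum_chi]
  simp

theorem card_le_exp_sum {α : Type*} [Fintype α] (P : α → Prop) [DecidablePred P] (g : α → ℝ)
    (hg : ∀ x, 0 ≤ g x) (h1 : ∀ x, P x → 1 ≤ g x) : (#{x | P x} : ℝ) ≤ ∑ x, g x := by
  rw [Finset.cast_card]
  refine (Finset.sum_le_sum fun x hx => h1 x ?_).trans (Finset.sum_le_univ_sum_of_nonneg hg)
  simpa using hx

/-- Chernoff bound on the joint event that two codewords are both within distance `r` of the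
source. -/
theorem pair_bound {n δ : ℕ} (s r : ℝ) (hs : 0 ≤ s) (z z' : Fin n → ZMod 2) :
    ((∑ I : Fin n → Fin δ → Fin n, #{S : Fin n → ZMod 2 | (hammingDist (ldgmEnc I z) S : ℝ) ≤ r ∧
        (hammingDist (ldgmEnc I z') S : ℝ) ≤ r} : ℕ) : ℝ)
      ≤ Real.exp (2 * s * r) * ((n : ℝ) ^ δ * ((1 + Real.exp (-s)) ^ 2 / 2) +
          ((n : ℝ) - 2 * hammingNorm (z - z')) ^ δ * ((1 - Real.exp (-s)) ^ 2 / 2)) ^ n := by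
  set θ := Real.exp (-s) with hθ
  have hθ0 : 0 < θ := Real.exp_pos _
  have step1 : ∀ I : Fin n → Fin δ → Fin n,
      (#{S : Fin n → ZMod 2 | (hammingDist (ldgmEnc I z) S : ℝ) ≤ r ∧
        (hammingDist (ldgmEnc I z') S : ℝ) ≤ r} : ℝ) ≤
      ∑ S : Fin n → ZMod 2, Real.exp (2 * s * r) *
        (θ ^ hammingDist (ldgmEnc I z) S * θ ^ hammingDist (ldgmEnc I z') S) := by
    intro I
    refine card_le_exp_sum _ _ (fun S => by positivity) fun S hS => ?_
    rw [hθ, ← Real.exp_nat_mul, ← Real.exp_nat_mul, ← Real.exp_add, ← Real.exp_add]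
    apply Real.one_le_exp
    nlinarith [hS.1, hS.2]
  have step2 : ∀ I : Fin n → Fin δ → Fin n,
      ∑ S : Fin n → ZMod 2, (θ ^ hammingDist (ldgmEnc I z) S * θ ^ hammingDist (ldgmEnc I z') S)
      = ∏ j, ((1 + θ) ^ 2 / 2 + chi (∑ i, (z - z') (I j i)) * ((1 - θ) ^ 2 / 2)) := by
    intro I
    simp_rw [theta_pow_dist, ← Finset.prod_mul_distrib]
    rw [← Fintype.prod_sum (fun (j : Fin n) (s : ZMod 2) =>
      (if ldgmEnc I z j = s then 1 else θ) * (if ldgmEnc I z' j = s then 1 else θ))]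
    refine Finset.prod_congr rfl fun j _ => ?_
    rw [sum_pair_weight, ldgmEnc_sub]
  push_cast
  refine (Finset.sum_le_sum fun I _ => step1 I).trans (le_of_eq ?_)
  simp_rw [← Finset.mul_sum, step2]
  congr 1
  rw [← Fintype.prod_sum (fun (_ : Fin n) (ι : Fin δ → Fin n) =>
    ((1 + θ) ^ 2 / 2 + chi (∑ i, (z - z') (ι i)) * ((1 - θ) ^ 2 / 2))), Finset.prod_const]
  rw [Finset.sum_add_distrib, ← Finset.sum_mul, sum_chi_pow]
  simp

/-- The optimal Chernoff tilt `θ = a / (1 - a)` attains the exponent `binEntropy a`. -/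
theorem entropy_theta (a : ℝ) (ha : 0 < a) (ha1 : a < 1) :
    Real.binEntropy a = -Real.log (a / (1 - a)) * a + Real.log (1 + a / (1 - a)) := by
  have hb : 0 < 1 - a := by linarith
  have : 1 + a / (1 - a) = (1 - a)⁻¹ := by field_simp; ring
  rw [this, Real.log_inv, Real.log_div ha.ne' hb.ne', Real.binEntropy, Real.log_inv, Real.log_inv]
  ring

theorem theta_facts (a : ℝ) (ha : 0 < a) (ha1 : a < 1 / 2) :
    0 ≤ -Real.log (a / (1 - a)) ∧ Real.exp (-(-Real.log (a / (1 - a)))) = a / (1 - a) ∧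
      0 < a / (1 - a) ∧ a / (1 - a) < 1 := by
  have hb : 0 < 1 - a := by linarith
  have h1 : 0 < a / (1 - a) := by positivity
  have h2 : a / (1 - a) < 1 := by rw [div_lt_one hb]; linarith
  refine ⟨?_, ?_, h1, h2⟩
  · have := Real.log_nonpos h1.le h2.le; linarith
  · rw [neg_neg, Real.exp_log h1]

theorem ballCard_le (n : ℕ) (a : ℝ) (ha : 0 < a) (ha1 : a < 1 / 2) :
    (ballCard n (a * n) : ℝ) ≤ Real.exp (n * Real.binEntropy a) := by
  obtain ⟨hs, hexp, hθ0, hθ1⟩ := theta_facts a ha ha1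
  set s := -Real.log (a / (1 - a)) with hsdef
  set θ := a / (1 - a) with hθ
  have h1 : (ballCard n (a * n) : ℝ) ≤
      ∑ S : Fin n → ZMod 2, Real.exp (s * (a * n)) * ∏ j, (if S j = 0 then 1 else θ) := by
    refine card_le_exp_sum _ _ (fun S => ?_) fun S hS => ?_
    · refine mul_nonneg (Real.exp_pos _).le (Finset.prod_nonneg fun j _ => ?_)
      split_ifs <;> linarith
    · rw [prod_weight, one_pow, mul_one, ← hexp, ← Real.exp_nat_mul, ← Real.exp_add]
      apply Real.one_le_exp
      nlinarith
  refine h1.trans (le_of_eq ?_)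
  rw [← Finset.mul_sum, ← Fintype.prod_sum (fun (_ : Fin n) (x : ZMod 2) => if x = 0 then 1 else θ)]
  simp only [sum_zmod2, Finset.prod_const, Finset.card_univ, Fintype.card_fin]
  rw [entropy_theta a ha (by linarith), ← hθ, ← hsdef, mul_add, Real.exp_add, Real.exp_nat_mul _ n,
    Real.exp_nat_mul _ n, Real.exp_log (by linarith), ← Real.exp_nat_mul]
  simp only [if_true, one_ne_zero, if_false]
  congr 2; ring

/-- The joint Chernoff bound at the optimal tilt, with the LDGM bias `(1 - 2w)^δ` of the difference word. -/
theorem pair_bound_entropy {n δ : ℕ} (hn : 0 < n) (hδ : Even δ) (a : ℝ) (ha : 0 < a)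
    (ha1 : a < 1 / 2) (z z' : Fin n → ZMod 2) :
    ((∑ I : Fin n → Fin δ → Fin n, #{S : Fin n → ZMod 2 |
        (hammingDist (ldgmEnc I z) S : ℝ) ≤ a * n ∧
        (hammingDist (ldgmEnc I z') S : ℝ) ≤ a * n} : ℕ) : ℝ)
      ≤ ((n : ℝ) ^ δ) ^ n * (Real.exp (2 * (n * Real.binEntropy a)) / 2 ^ n *
        (1 + (1 - 2 * ((hammingNorm (z - z') : ℝ) / n)) ^ δ) ^ n) := by
  obtain ⟨hs, hexp, hθ0, hθ1⟩ := theta_facts a ha ha1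
  refine (pair_bound _ _ hs z z').trans ?_
  rw [hexp]
  have hent := entropy_theta a ha (by linarith)
  set s := -Real.log (a / (1 - a)) with hsdef
  set θ := a / (1 - a) with hθ
  set w : ℝ := ((hammingNorm (z - z') : ℕ) : ℝ) with hw
  have hn' : (0 : ℝ) < n := by exact_mod_cast hn
  have hu : ((n : ℝ) - 2 * w) ^ δ = (n : ℝ) ^ δ * (1 - 2 * (w / n)) ^ δ := by
    rw [← mul_pow]; congr 1; field_simp
  have hu0 : 0 ≤ (1 - 2 * (w / n)) ^ δ := hδ.pow_nonneg _
  set u := (1 - 2 * (w / n)) ^ δ with hudef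
  have h1 : (n : ℝ) ^ δ * ((1 + θ) ^ 2 / 2) + ((n : ℝ) - 2 * w) ^ δ * ((1 - θ) ^ 2 / 2)
      ≤ (n : ℝ) ^ δ * (((1 + θ) ^ 2 / 2) * (1 + u)) := by
    rw [hu]
    have : (1 - θ) ^ 2 ≤ (1 + θ) ^ 2 := by nlinarith
    calc _ = (n : ℝ) ^ δ * ((1 + θ) ^ 2 / 2 + u * ((1 - θ) ^ 2 / 2)) := by ring
      _ ≤ (n : ℝ) ^ δ * ((1 + θ) ^ 2 / 2 + u * ((1 + θ) ^ 2 / 2)) := by gcongr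
      _ = _ := by ring
  have h0 : 0 ≤ (n : ℝ) ^ δ * ((1 + θ) ^ 2 / 2) + ((n : ℝ) - 2 * w) ^ δ * ((1 - θ) ^ 2 / 2) := by
    rw [hu]; positivity
  have h2 : Real.exp (2 * (n * Real.binEntropy a)) = Real.exp (2 * s * (a * n)) * ((1 + θ) ^ 2) ^ n := by
    rw [hent, ← pow_mul, mul_comm 2 n, pow_mul, ← Real.exp_log (show 0 < 1 + θ by linarith),
      ← Real.exp_nat_mul, ← Real.exp_nat_mul, ← Real.exp_add]
    congr 1
    push_cast
    rw [Real.exp_log (show 0 < 1 + θ by linarith)]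
    ring
  calc _ ≤ Real.exp (2 * s * (a * n)) * ((n : ℝ) ^ δ * (((1 + θ) ^ 2 / 2) * (1 + u))) ^ n := by gcongr
    _ = _ := by rw [h2, mul_pow, mul_pow, div_pow]; ring

/-- The second-moment inequality for a linear code `C` passed through a random LDGM encoder. -/
theorem second_moment {n δ : ℕ} (r : ℝ) (C : Finset (Fin n → ZMod 2))
    (hC : ∀ x ∈ C, ∀ y ∈ C, x - y ∈ C) (hC0 : 0 < #C) (q : (Fin n → ZMod 2) → ℝ)
    (hq : ∀ z z', ((∑ I : Fin n → Fin δ → Fin n, #{S : Fin n → ZMod 2 |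
        (hammingDist (ldgmEnc I z) S : ℝ) ≤ r ∧
        (hammingDist (ldgmEnc I z') S : ℝ) ≤ r} : ℕ) : ℝ) ≤ q (z - z')) :
    (#C : ℝ) * (((n : ℝ) ^ δ) ^ n * ballCard n r) ^ 2
      ≤ #{p : (Fin n → Fin δ → Fin n) × (Fin n → ZMod 2) |
          ∃ z ∈ C, (hammingDist (ldgmEnc p.1 z) p.2 : ℝ) ≤ r} * ∑ y ∈ C, q y := by
  set X : (Fin n → Fin δ → Fin n) × (Fin n → ZMod 2) → ℝ := fun p =>
    ∑ z ∈ C, if (hammingDist (ldgmEnc p.1 z) p.2 : ℝ) ≤ r then 1 else 0 with hX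
  set G : Finset ((Fin n → Fin δ → Fin n) × (Fin n → ZMod 2)) :=
    univ.filter fun p => ∃ z ∈ C, (hammingDist (ldgmEnc p.1 z) p.2 : ℝ) ≤ r with hG
  have hT : (Fintype.card (Fin n → Fin δ → Fin n) : ℝ) = ((n : ℝ) ^ δ) ^ n := by simp
  have hm1 : ∑ p, X p = #C * (((n : ℝ) ^ δ) ^ n * ballCard n r) := by
    simp only [hX]
    rw [Finset.sum_comm, ← nsmul_eq_mul, ← Finset.sum_const]
    refine Finset.sum_congr rfl fun z _ => ?_
    rw [Fintype.sum_prod_type]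
    simp only [Finset.sum_boole, card_near, Finset.sum_const, Finset.card_univ, nsmul_eq_mul, hT]
  have hm2 : ∑ p, X p ^ 2 ≤ #C * ∑ y ∈ C, q y := by
    have e1 : ∑ p, X p ^ 2 = ∑ z ∈ C, ∑ z' ∈ C,
        ((∑ I : Fin n → Fin δ → Fin n, #{S : Fin n → ZMod 2 |
        (hammingDist (ldgmEnc I z) S : ℝ) ≤ r ∧
        (hammingDist (ldgmEnc I z') S : ℝ) ≤ r} : ℕ) : ℝ) := by
      simp only [hX, sq, Finset.sum_mul_sum]
      rw [Finset.sum_comm]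
      refine Finset.sum_congr rfl fun z _ => ?_
      rw [Finset.sum_comm]
      refine Finset.sum_congr rfl fun z' _ => ?_
      rw [Fintype.sum_prod_type]
      push_cast
      refine Finset.sum_congr rfl fun I _ => ?_
      rw [← Finset.sum_boole]
      refine Finset.sum_congr rfl fun S _ => ?_
      rw [ite_and]
      split_ifs <;> simp
    rw [e1, ← nsmul_eq_mul, ← Finset.sum_const]
    refine Finset.sum_le_sum fun z hz => ?_
    refine (Finset.sum_le_sum fun z' _ => hq z z').trans (le_of_eq ?_)
    refine Finset.sum_nbij' (fun y => z - y) (fun y => z - y) ?_ ?_ ?_ ?_ ?_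
    · exact fun y hy => hC z hz y hy
    · exact fun y hy => hC z hz y hy
    · intro y _; simp
    · intro y _; simp
    · intro y _; rfl
  have hsupp : ∑ p, X p = ∑ p ∈ G, 1 * X p := by
    simp only [one_mul]
    symm
    refine Finset.sum_subset (Finset.subset_univ _) fun p _ hp => ?_
    refine Finset.sum_eq_zero fun z hz => if_neg fun h => hp ?_
    simp only [hG, Finset.mem_filter, Finset.mem_univ, true_and]
    exact ⟨z, hz, h⟩
  -- Cauchy–Schwarz on the support of the counting variable `X`
  have hCS := Finset.sum_mul_sq_le_sq_mul_sq G (fun _ => (1 : ℝ)) X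
  rw [← hsupp, hm1] at hCS
  simp only [one_pow, Finset.sum_const, nsmul_eq_mul, mul_one] at hCS
  have h2 : ∑ p ∈ G, X p ^ 2 ≤ ∑ p, X p ^ 2 :=
    Finset.sum_le_univ_sum_of_nonneg fun _ => sq_nonneg _
  have hC0' : (0 : ℝ) < #C := by exact_mod_cast hC0
  refine le_of_mul_le_mul_left ?_ hC0'
  calc (#C : ℝ) * (#C * (((n : ℝ) ^ δ) ^ n * ballCard n r) ^ 2)
      = (#C * (((n : ℝ) ^ δ) ^ n * ballCard n r)) ^ 2 := by ring
    _ ≤ #G * ∑ p ∈ G, X p ^ 2 := hCS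
    _ ≤ #G * (#C * ∑ y ∈ C, q y) := by gcongr; exact h2.trans hm2
    _ = _ := by ring

/-! ### Weight enumerators and the covered set -/

theorem pair_trivial {n δ : ℕ} (r : ℝ) (z z' : Fin n → ZMod 2) :
    ((∑ I : Fin n → Fin δ → Fin n, #{S : Fin n → ZMod 2 |
        (hammingDist (ldgmEnc I z) S : ℝ) ≤ r ∧
        (hammingDist (ldgmEnc I z') S : ℝ) ≤ r} : ℕ) : ℝ) ≤ ((n : ℝ) ^ δ) ^ n * ballCard n r := by
  have h : ∀ I : Fin n → Fin δ → Fin n, #{S : Fin n → ZMod 2 |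
        (hammingDist (ldgmEnc I z) S : ℝ) ≤ r ∧
        (hammingDist (ldgmEnc I z') S : ℝ) ≤ r} ≤ ballCard n r := fun I => by
    rw [← card_near n r (ldgmEnc I z)]
    exact Finset.card_le_card fun S hS => by
      simp only [Finset.mem_filter, Finset.mem_univ, true_and] at hS ⊢
      exact hS.1
  have h2 := Finset.sum_le_sum fun I (_ : I ∈ univ) => h I
  rw [Finset.sum_const, Finset.card_univ] at h2
  have h3 : (Fintype.card (Fin n → Fin δ → Fin n) : ℝ) = ((n : ℝ) ^ δ) ^ n := by simp
  rw [← h3]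
  exact_mod_cast h2

/-- Words whose relative weight lies in `[ω, 1 - ω]`. -/
def midWeight (ω : ℝ) {n : ℕ} (z : Fin n → ZMod 2) : Prop :=
  ω * n ≤ hammingNorm z ∧ (hammingNorm z : ℝ) ≤ (1 - ω) * n

theorem hammingNorm_compl {n : ℕ} (z : Fin n → ZMod 2) :
    (hammingNorm (1 - z) : ℝ) = n - hammingNorm z := by
  have h : #{j | z j ≠ 0} + #{j | ¬ z j ≠ 0} = n := by
    rw [Finset.card_filter_add_card_filter_not]; simp
  have h2 : hammingNorm (1 - z) = #{j | ¬ z j ≠ 0} := by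
    unfold hammingNorm
    congr 1
    ext j
    rcases zmod2_cases (z j) with h | h <;> simp [h]
  have h3 : hammingNorm z + hammingNorm (1 - z) = n := by rw [h2]; exact h
  rw [eq_sub_iff_add_eq']
  exact_mod_cast h3

theorem card_not_mid {n : ℕ} (ω : ℝ) (h0 : 0 < ω) (h1 : ω < 1 / 2) :
    (#{z : Fin n → ZMod 2 | ¬ midWeight ω z} : ℝ) ≤ 2 * Real.exp (n * Real.binEntropy ω) := by
  have hb := ballCard_le n ω h0 h1
  set L : Finset (Fin n → ZMod 2) := {S | (hammingNorm S : ℝ) ≤ ω * n} with hL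
  have hsub : ({z : Fin n → ZMod 2 | ¬ midWeight ω z} : Finset _) ⊆ L ∪ L.image (fun z => 1 - z) := by
    intro z hz
    simp only [Finset.mem_filter, Finset.mem_univ, true_and, midWeight, not_and_or, not_le] at hz
    rw [Finset.mem_union, Finset.mem_image]
    rcases hz with hz | hz
    · left; simpa [hL] using hz.le
    · right
      refine ⟨1 - z, ?_, by simp⟩
      simp only [hL, Finset.mem_filter, Finset.mem_univ, true_and, hammingNorm_compl]
      linarith
  have hc : #{z : Fin n → ZMod 2 | ¬ midWeight ω z} ≤ #L + #L :=
    (Finset.card_le_card hsub).trans ((Finset.card_union_le _ _).trans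
      (Nat.add_le_add_left Finset.card_image_le _))
  have hc' : (#{z : Fin n → ZMod 2 | ¬ midWeight ω z} : ℝ) ≤ #L + #L := by exact_mod_cast hc
  have : (#L : ℝ) = ballCard n (ω * n) := rfl
  linarith

/-- The per-bit cost of a word of middle weight is below the entropy deficit `u ^ 2 / 4`, for the bias
`u = 1 - 2w`. -/
theorem mid_factor (u v : ℝ) (L d : ℕ) (huv : |u| ≤ v) (hv1 : v ≤ 1) (hL : 2 ≤ L) (hLe : Even L)
    (hv : v ^ (L - 2) ≤ 1 / 8) (hLd : L ≤ d) (hd : Even d) :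
    (1 + u ^ L) * (1 + u ^ d) ≤ Real.exp (u ^ 2 / 4) := by
  have h1 : u ^ L ≤ u ^ 2 / 8 := by
    have : u ^ L = u ^ 2 * |u| ^ (L - 2) := by
      rw [← hLe.pow_abs, ← sq_abs, ← pow_add]; congr 1; omega
    rw [this]
    have : |u| ^ (L - 2) ≤ 1 / 8 := (pow_le_pow_left₀ (abs_nonneg _) huv _).trans hv
    nlinarith [sq_nonneg u]
  have h2 : u ^ d ≤ u ^ L := by
    rw [← hLe.pow_abs, ← hd.pow_abs]
    exact pow_le_pow_of_le_one (abs_nonneg _) (huv.trans hv1) hLd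
  have h3 : 0 ≤ u ^ L := hLe.pow_nonneg _
  have h4 : 0 ≤ u ^ d := hd.pow_nonneg _
  calc (1 + u ^ L) * (1 + u ^ d) ≤ Real.exp (u ^ L) * Real.exp (u ^ d) := by
        gcongr
        · rw [add_comm]; exact Real.add_one_le_exp _
        · rw [add_comm]; exact Real.add_one_le_exp _
    _ = Real.exp (u ^ L + u ^ d) := (Real.exp_add _ _).symm
    _ ≤ _ := Real.exp_le_exp.2 (by linarith)

theorem sum_exp_weight (n : ℕ) (hn : 0 < n) :
    ∑ z : Fin n → ZMod 2, Real.exp (n * ((1 - 2 * ((hammingNorm z : ℝ) / n)) ^ 2 / 4))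
      ≤ (n + 1) * 2 ^ n := by
  have hmap : ∀ z ∈ (univ : Finset (Fin n → ZMod 2)), hammingNorm z ∈ Finset.range (n + 1) := by
    intro z _
    have := hammingNorm_le_card_fintype (x := z)
    simp at this ⊢; omega
  rw [← Finset.sum_fiberwise_of_maps_to hmap]
  have : ∀ w ∈ Finset.range (n + 1), ∑ z : Fin n → ZMod 2 with hammingNorm z = w,
      Real.exp (n * ((1 - 2 * ((hammingNorm z : ℝ) / n)) ^ 2 / 4)) ≤ 2 ^ n := by
    intro w hw
    have e : ∑ z : Fin n → ZMod 2 with hammingNorm z = w,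
      Real.exp (n * ((1 - 2 * ((hammingNorm z : ℝ) / n)) ^ 2 / 4)) =
      ∑ z : Fin n → ZMod 2 with hammingNorm z = w,
        Real.exp (n * ((1 - 2 * ((w : ℝ) / n)) ^ 2 / 4)) :=
      Finset.sum_congr rfl fun z hz => by
        simp only [Finset.mem_filter, Finset.mem_univ, true_and] at hz; rw [hz]
    have hcw : #{z : Fin n → ZMod 2 | hammingNorm z = w} = n.choose w := by
      have := card_weight (ι := Fin n) w
      rw [Fintype.card_fin] at this
      convert this
    rw [e, Finset.sum_const, nsmul_eq_mul, hcw]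
    exact choose_mul_exp_le n w (by simpa [Nat.lt_succ_iff] using hw) hn
  refine (Finset.sum_le_sum this).trans ?_
  simp

/-- The LDGM second-moment weight of a word. -/
def midFactor (n δ : ℕ) (z : Fin n → ZMod 2) : ℝ :=
  (1 + (1 - 2 * ((hammingNorm z : ℝ) / n)) ^ δ) ^ n

/-- The middle-weight enumerator, averaged over the regular LDPC ensemble, is at most `poly(n) 2^n / 2^k`. -/
theorem sum_mid_le {k n dv d δ : ℕ} (ω : ℝ) (h0 : 0 < ω) (h1 : ω < 1 / 2) (hn : 0 < n)
    (h : k * d = n * dv) (hbig : 2 * dv * d < k * d) (hpos : 0 < dv * d) (hkn : k ≤ n)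
    (hδ : 2 ≤ δ) (hδe : Even δ) (hv : (1 - 2 * ω) ^ (δ - 2) ≤ 1 / 8) (hδd : δ ≤ d) (hd : Even d) :
    ∑ H : Matrix (Fin k) (Fin n) (ZMod 2) with regularLDPC dv d H,
      ∑ z : Fin n → ZMod 2 with Matrix.mulVec H z = 0 ∧ midWeight ω z, midFactor n δ z
    ≤ 2 * ((k * d : ℕ) : ℝ) ^ (2 * (4 * dv * d)) * (((k * d : ℕ) : ℝ) + 1) * ((n + 1) * 2 ^ n) / 2 ^ k
      * #{H : Matrix (Fin k) (Fin n) (ZMod 2) | regularLDPC dv d H} := by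
  set P := 2 * ((k * d : ℕ) : ℝ) ^ (2 * (4 * dv * d)) * (((k * d : ℕ) : ℝ) + 1) with hP
  have hP0 : 0 ≤ P := by positivity
  set R := (#{H : Matrix (Fin k) (Fin n) (ZMod 2) | regularLDPC dv d H} : ℝ) with hR
  have hn' : (0 : ℝ) < n := by exact_mod_cast hn
  have hsum : ∑ H : Matrix (Fin k) (Fin n) (ZMod 2) with regularLDPC dv d H,
      ∑ z : Fin n → ZMod 2 with Matrix.mulVec H z = 0 ∧ midWeight ω z, midFactor n δ z
      = ∑ z : Fin n → ZMod 2, if midWeight ω z then midFactor n δ z *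
        #{H : Matrix (Fin k) (Fin n) (ZMod 2) | regularLDPC dv d H ∧ Matrix.mulVec H z = 0}
        else 0 := by
    simp_rw [Finset.sum_filter]
    simp_rw [← Finset.sum_filter (fun H : Matrix (Fin k) (Fin n) (ZMod 2) => regularLDPC dv d H)]
    rw [Finset.sum_comm]
    refine Finset.sum_congr rfl fun z _ => ?_
    split_ifs with hm
    · simp only [hm, and_true]
      rw [← Finset.sum_filter, Finset.filter_filter, Finset.sum_const, nsmul_eq_mul, mul_comm]
    · simp [hm]
  rw [hsum]
  have hterm : ∀ z : Fin n → ZMod 2, (if midWeight ω z then midFactor n δ z *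
        (#{H : Matrix (Fin k) (Fin n) (ZMod 2) | regularLDPC dv d H ∧ Matrix.mulVec H z = 0} : ℝ)
        else 0) ≤ P * R / 2 ^ k * Real.exp (n * ((1 - 2 * ((hammingNorm z : ℝ) / n)) ^ 2 / 4)) := by
    intro z
    split_ifs with hm
    · have hp := prob_codeword_le h hbig hpos z
      rw [← hP, ← hR] at hp
      unfold midFactor
      set u := 1 - 2 * ((hammingNorm z : ℝ) / n) with hu
      have hw1 : ω ≤ (hammingNorm z : ℝ) / n := by rw [le_div_iff₀ hn']; exact hm.1
      have hw2 : (hammingNorm z : ℝ) / n ≤ 1 - ω := by rw [div_le_iff₀ hn']; exact hm.2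
      have habs : |u| ≤ 1 - 2 * ω := by rw [abs_le]; constructor <;> linarith
      have hf := mid_factor u (1 - 2 * ω) δ d habs (by linarith) hδ hδe hv hδd hd
      have hu1 : 0 ≤ u ^ δ := hδe.pow_nonneg _
      have hu2 : 0 ≤ u ^ d := hd.pow_nonneg _
      calc (1 + u ^ δ) ^ n * (#{H : Matrix (Fin k) (Fin n) (ZMod 2) | regularLDPC dv d H ∧ Matrix.mulVec H z = 0} : ℝ)
          ≤ (1 + u ^ δ) ^ n * (P * ((1 + u ^ d) / 2) ^ k * R) := by gcongr
        _ = P * R / 2 ^ k * ((1 + u ^ δ) ^ n * (1 + u ^ d) ^ k) := by rw [div_pow]; ring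
        _ ≤ P * R / 2 ^ k * ((1 + u ^ δ) ^ n * (1 + u ^ d) ^ n) := by
            gcongr; linarith
        _ = P * R / 2 ^ k * ((1 + u ^ δ) * (1 + u ^ d)) ^ n := by rw [mul_pow]
        _ ≤ P * R / 2 ^ k * (Real.exp (u ^ 2 / 4)) ^ n := by gcongr
        _ = _ := by rw [← Real.exp_nat_mul]
    · positivity
  refine (Finset.sum_le_sum fun z _ => hterm z).trans ?_
  rw [← Finset.mul_sum]
  refine (mul_le_mul_of_nonneg_left (sum_exp_weight n hn) (by positivity)).trans (le_of_eq ?_)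
  ring

/-- For one linear code `C` with enough codewords and small middle-weight enumerator, an
exponentially non-negligible fraction of pairs (encoder, source) is covered at distortion `a`. -/
theorem covered_lower {n δ : ℕ} (hn : 0 < n) (hδ : Even δ) (a ω γ ε K : ℝ) (ha : 0 < a)
    (ha1 : a < 1 / 2) (h0 : 0 < ω) (h1 : ω < 1 / 2) (hω : Real.binEntropy ω ≤ γ / 2)
    (hεγ : ε ≤ γ / 2) (hK : K = Real.exp (n * (Real.binEntropy a - γ)))
    (C : Finset (Fin n → ZMod 2)) (hC : ∀ x ∈ C, ∀ y ∈ C, x - y ∈ C)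
    (hcard : (2 : ℝ) ^ n / K ≤ #C)
    (hmid : ∑ z ∈ C with midWeight ω z, midFactor n δ z ≤ Real.exp (2 * ε * n) * 2 ^ n / K)
    (hball : Real.exp (n * (Real.binEntropy a - ε)) ≤ ballCard n (a * n))
    (h3 : 3 ≤ Real.exp (ε * n)) (hε : 0 < ε) :
    ((n : ℝ) ^ δ) ^ n * 2 ^ n ≤ Real.exp (5 * ε * n) *
      #{p : (Fin n → Fin δ → Fin n) × (Fin n → ZMod 2) |
          ∃ z ∈ C, (hammingDist (ldgmEnc p.1 z) p.2 : ℝ) ≤ a * n} := by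
  set A : ℝ := (#{p : (Fin n → Fin δ → Fin n) × (Fin n → ZMod 2) |
          ∃ z ∈ C, (hammingDist (ldgmEnc p.1 z) p.2 : ℝ) ≤ a * n} : ℝ) with hA
  set T : ℝ := ((n : ℝ) ^ δ) ^ n with hT
  set B : ℝ := (ballCard n (a * n) : ℝ) with hB
  set h := Real.binEntropy a with hh
  have hn' : (0 : ℝ) < n := by exact_mod_cast hn
  have hT0 : 0 < T := by positivity
  have hK0 : 0 < K := by rw [hK]; exact Real.exp_pos _
  have hB0 : 0 < B := lt_of_lt_of_le (Real.exp_pos _) hball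
  have hA0 : 0 ≤ A := Nat.cast_nonneg _
  have hw0 : 0 < (2 : ℝ) ^ n / K := by positivity
  have hC0 : 0 < #C := by
    have := lt_of_lt_of_le hw0 hcard
    exact_mod_cast this
  set E := Real.exp (2 * (n * h)) with hE
  have hsm := second_moment (δ := δ) (a * n) C hC hC0
    (fun y => if midWeight ω y then T * (E / 2 ^ n * midFactor n δ y) else T * B) (by
      intro z z'
      split_ifs with hm
      · exact pair_bound_entropy hn hδ a ha ha1 z z'
      · exact pair_trivial _ z z')
  rw [← hA, ← hT, ← hB] at hsm
  have hnm : (#{y ∈ C | ¬ midWeight ω y} : ℝ) ≤ 2 * Real.exp (n * (γ / 2)) := by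
    refine le_trans ?_ ((card_not_mid (n := n) ω h0 h1).trans ?_)
    · exact_mod_cast Finset.card_le_card (Finset.filter_subset_filter _ (Finset.subset_univ C))
    · gcongr
  have hsum : ∑ y ∈ C, (if midWeight ω y then T * (E / 2 ^ n * midFactor n δ y) else T * B)
      ≤ T * (E / 2 ^ n * (Real.exp (2 * ε * n) * 2 ^ n / K) + 2 * Real.exp (n * (γ / 2)) * B) := by
    rw [Finset.sum_ite, ← Finset.mul_sum, ← Finset.mul_sum, Finset.sum_const, nsmul_eq_mul]
    have e1 : E / 2 ^ n * ∑ z ∈ C with midWeight ω z, midFactor n δ z ≤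
      E / 2 ^ n * (Real.exp (2 * ε * n) * 2 ^ n / K) := by gcongr
    have e2 : (#{y ∈ C | ¬ midWeight ω y} : ℝ) * B ≤ 2 * Real.exp (n * (γ / 2)) * B := by gcongr
    calc _ = T * (E / 2 ^ n * ∑ z ∈ C with midWeight ω z, midFactor n δ z +
          (#{y ∈ C | ¬ midWeight ω y} : ℝ) * B) := by ring
      _ ≤ _ := by gcongr
  -- both contributions are at most an exponentially small multiple of the squared first moment
  have b1 : Real.exp (n * (γ / 2)) * B ≤ B ^ 2 / K := by
    rw [le_div_iff₀ hK0, sq]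
    have : Real.exp (n * (γ / 2)) * K ≤ B := by
      refine le_trans ?_ hball
      rw [hK, ← Real.exp_add]
      apply Real.exp_le_exp.2
      nlinarith
    nlinarith
  have b2 : E ≤ Real.exp (2 * ε * n) * B ^ 2 := by
    have : E = Real.exp (2 * ε * n) * Real.exp (n * (h - ε)) ^ 2 := by
      rw [hE, ← Real.exp_nat_mul, ← Real.exp_add]; congr 1; push_cast; ring
    rw [this]; gcongr
  have b3 : E / 2 ^ n * (Real.exp (2 * ε * n) * 2 ^ n / K) ≤ Real.exp (4 * ε * n) * (B ^ 2 / K) := by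
    have e4 : Real.exp (4 * ε * n) = Real.exp (2 * ε * n) * Real.exp (2 * ε * n) := by
      rw [← Real.exp_add]; congr 1; ring
    calc E / 2 ^ n * (Real.exp (2 * ε * n) * 2 ^ n / K) = E * (Real.exp (2 * ε * n) / K) := by
          field_simp
      _ ≤ Real.exp (2 * ε * n) * B ^ 2 * (Real.exp (2 * ε * n) / K) := by gcongr
      _ = _ := by rw [e4]; ring
  have hone : 1 ≤ Real.exp (4 * ε * n) := Real.one_le_exp (by positivity)
  have e5 : Real.exp (5 * ε * n) = Real.exp (4 * ε * n) * Real.exp (ε * n) := by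
    rw [← Real.exp_add]; congr 1; ring
  have hBK : 0 < B ^ 2 / K := by positivity
  have b4 : E / 2 ^ n * (Real.exp (2 * ε * n) * 2 ^ n / K) + 2 * Real.exp (n * (γ / 2)) * B
      ≤ Real.exp (5 * ε * n) * (B ^ 2 / K) := by
    have : Real.exp (4 * ε * n) + 2 ≤ Real.exp (5 * ε * n) := by rw [e5]; nlinarith
    nlinarith
  have hfin : 2 ^ n / K * (T * B) ^ 2 ≤ A * (T * (Real.exp (5 * ε * n) * (B ^ 2 / K))) :=
    calc 2 ^ n / K * (T * B) ^ 2 ≤ #C * (T * B) ^ 2 := by gcongr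
      _ ≤ _ := hsm
      _ ≤ _ := by gcongr; exact hsum.trans (by gcongr)
  have hc0 : 0 < T * (B ^ 2 / K) := by positivity
  refine le_of_mul_le_mul_right ?_ hc0
  calc T * 2 ^ n * (T * (B ^ 2 / K)) = 2 ^ n / K * (T * B) ^ 2 := by ring
    _ ≤ _ := hfin
    _ = _ := by ring

theorem hammingDist_update {n δ : ℕ} (z : Fin n → ZMod 2)
    (x : Fin n → (Fin δ → Fin n) × ZMod 2) (i : Fin n) (b : (Fin δ → Fin n) × ZMod 2) :
    hammingDist (ldgmEnc (fun j => (Function.update x i b j).1) z)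
        (fun j => (Function.update x i b j).2) ≤
      hammingDist (ldgmEnc (fun j => (x j).1) z) (fun j => (x j).2) + 1 := by
  unfold hammingDist
  refine le_trans (Finset.card_le_card (t := insert i _) ?_) (Finset.card_insert_le i _)
  intro j hj
  rw [Finset.mem_insert]
  by_cases hji : j = i
  · exact Or.inl hji
  · right
    simpa [ldgmEnc, Function.update_of_ne hji] using hj

/-- Blowing-up: a not too small covered set at distortion `a` forces an exponentially small
uncovered set at any larger distortion `D`. -/
theorem uncovered_upper {n δ : ℕ} (hn : 0 < n) (a D ε : ℝ) (haD : a < D)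
    (hε : ε ≤ (D - a) ^ 2 / 20) (C : Finset (Fin n → ZMod 2)) (hC0 : C.Nonempty)
    (hcov : ((n : ℝ) ^ δ) ^ n * 2 ^ n ≤ Real.exp (5 * ε * n) *
      #{p : (Fin n → Fin δ → Fin n) × (Fin n → ZMod 2) |
          ∃ z ∈ C, (hammingDist (ldgmEnc p.1 z) p.2 : ℝ) ≤ a * n}) :
    (#{p : (Fin n → Fin δ → Fin n) × (Fin n → ZMod 2) |
          ¬ ∃ z ∈ C, (hammingDist (ldgmEnc p.1 z) p.2 : ℝ) ≤ D * n} : ℝ)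
      ≤ Real.exp (-(ε * n)) * (((n : ℝ) ^ δ) ^ n * 2 ^ n) := by
  set f : (Fin n → (Fin δ → Fin n) × ZMod 2) → ℝ := fun x =>
    C.inf' hC0 fun z => (hammingDist (ldgmEnc (fun j => (x j).1) z) (fun j => (x j).2) : ℝ) with hf
  have hlip : ∀ x i b, f (Function.update x i b) ≤ f x + 1 := by
    intro x i b
    obtain ⟨z, hz, hzf⟩ := Finset.exists_mem_eq_inf' hC0
      fun z => (hammingDist (ldgmEnc (fun j => (x j).1) z) (fun j => (x j).2) : ℝ)
    simp only [hf]
    rw [hzf]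
    refine (Finset.inf'_le _ hz).trans ?_
    exact_mod_cast hammingDist_update z x i b
  have hcon := concentration f hlip (D - a) (a * n) (D * n) (by linarith) (by ring)
  set e : (Fin n → (Fin δ → Fin n) × ZMod 2) ≃ (Fin n → Fin δ → Fin n) × (Fin n → ZMod 2) :=
    Equiv.arrowProdEquivProdArrow _ _ _ with he
  have hA : #{p : (Fin n → Fin δ → Fin n) × (Fin n → ZMod 2) |
      ∃ z ∈ C, (hammingDist (ldgmEnc p.1 z) p.2 : ℝ) ≤ a * n} = #{x | f x ≤ a * n} := by
    symm
    refine Finset.card_equiv e fun x => ?_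
    simp only [hf, Finset.mem_filter, Finset.mem_univ, true_and, Finset.inf'_le_iff]
    rfl
  have hBad : #{p : (Fin n → Fin δ → Fin n) × (Fin n → ZMod 2) |
      ¬ ∃ z ∈ C, (hammingDist (ldgmEnc p.1 z) p.2 : ℝ) ≤ D * n} ≤ #{x | D * n ≤ f x} := by
    have : #{p : (Fin n → Fin δ → Fin n) × (Fin n → ZMod 2) |
      ¬ ∃ z ∈ C, (hammingDist (ldgmEnc p.1 z) p.2 : ℝ) ≤ D * n} = #{x | ¬ f x ≤ D * n} := by
      symm
      refine Finset.card_equiv e fun x => ?_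
      simp only [hf, Finset.mem_filter, Finset.mem_univ, true_and, Finset.inf'_le_iff]
      rfl
    rw [this]
    refine Finset.card_le_card fun x hx => ?_
    simp only [Finset.mem_filter, Finset.mem_univ, true_and, not_le] at hx ⊢
    exact hx.le
  rw [← hA] at hcon
  set A : ℝ := (#{p : (Fin n → Fin δ → Fin n) × (Fin n → ZMod 2) |
          ∃ z ∈ C, (hammingDist (ldgmEnc p.1 z) p.2 : ℝ) ≤ a * n} : ℝ)
  have hBad' : (#{p : (Fin n → Fin δ → Fin n) × (Fin n → ZMod 2) |
      ¬ ∃ z ∈ C, (hammingDist (ldgmEnc p.1 z) p.2 : ℝ) ≤ D * n} : ℝ) ≤ #{x | D * n ≤ f x} := by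
    exact_mod_cast hBad
  refine hBad'.trans ?_
  set Bd : ℝ := (#{x | D * n ≤ f x} : ℝ)
  have hBd0 : 0 ≤ Bd := Nat.cast_nonneg _
  have hn' : (0 : ℝ) < n := by exact_mod_cast hn
  set V : ℝ := ((n : ℝ) ^ δ) ^ n * 2 ^ n with hV
  have hV0 : 0 < V := by positivity
  have hcardΩ : (Fintype.card ((Fin δ → Fin n) × ZMod 2) : ℝ) ^ (2 * n) = V ^ 2 := by
    simp [hV, ZMod.card, mul_pow, ← pow_mul]
    ring
  rw [hcardΩ] at hcon
  have h5 : V * Bd ≤ Real.exp (5 * ε * n) * (Real.exp (-((D - a) ^ 2 / 2 * n)) * V ^ 2) :=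
    calc V * Bd ≤ Real.exp (5 * ε * n) * A * Bd := by gcongr
      _ = Real.exp (5 * ε * n) * (A * Bd) := by ring
      _ ≤ _ := by gcongr
  have h6 : Real.exp (5 * ε * n) * Real.exp (-((D - a) ^ 2 / 2 * n)) ≤ Real.exp (-(ε * n)) := by
    rw [← Real.exp_add]
    apply Real.exp_le_exp.2
    nlinarith [sq_nonneg (D - a)]
  refine le_of_mul_le_mul_left ?_ hV0
  calc V * Bd ≤ _ := h5
    _ = (Real.exp (5 * ε * n) * Real.exp (-((D - a) ^ 2 / 2 * n))) * V ^ 2 := by ring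
    _ ≤ Real.exp (-(ε * n)) * V ^ 2 := by gcongr
    _ = _ := by ring

/-! ### Asymptotics and the choice of parameters -/

/-- Hamming balls of relative radius `a` have at least `exp (n (H(a) - ε))` points. -/
theorem eventually_ball (a ε : ℝ) (ha : 0 < a) (ha1 : a < 1) (hε : 0 < ε) :
    ∀ᶠ n : ℕ in Filter.atTop,
      Real.exp (n * (Real.binEntropy a - ε)) ≤ (ballCard n (a * n) : ℝ) := by
  have hlim : Filter.Tendsto (fun n : ℕ => Real.binEntropy ((⌊a * (n : ℝ)⌋₊ : ℝ) / (n : ℝ)))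
      Filter.atTop (nhds (Real.binEntropy a)) :=
    (Real.binEntropy_continuous.tendsto a).comp
      ((tendsto_nat_floor_mul_div_atTop ha.le).comp tendsto_natCast_atTop_atTop)
  have h1 := hlim.eventually (lt_mem_nhds (show Real.binEntropy a - ε / 2 < Real.binEntropy a by linarith))
  have h2 : ∀ᶠ n : ℕ in Filter.atTop, ‖(n : ℝ) ^ 1‖ ≤ 1 / 2 * ‖Real.exp (ε / 2 * (n : ℝ))‖ :=
    tendsto_natCast_atTop_atTop.eventually
      ((isLittleO_pow_exp_pos_mul_atTop 1 (half_pos hε)).def (by norm_num : (0 : ℝ) < 1 / 2))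
  filter_upwards [h1, h2, Filter.eventually_ge_atTop 1] with n h1 h2 hn
  have hn' : (0 : ℝ) < n := by exact_mod_cast hn
  have hn1 : (1 : ℝ) ≤ n := by exact_mod_cast hn
  rw [pow_one, Real.norm_of_nonneg hn'.le, Real.norm_of_nonneg (Real.exp_pos _).le] at h2
  set m := ⌊a * (n : ℝ)⌋₊ with hm
  have hmle : (m : ℝ) ≤ a * n := Nat.floor_le (by positivity)
  have hmn : m ≤ n := by
    have : (m : ℝ) ≤ n := hmle.trans (by nlinarith)
    exact_mod_cast this
  have hch : (n.choose m : ℝ) ≤ ballCard n (a * n) := by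
    have := card_weight (ι := Fin n) m
    rw [Fintype.card_fin] at this
    rw [← this]
    unfold ballCard
    have hsub : #{y : Fin n → ZMod 2 | hammingNorm y = m} ≤
        #{S : Fin n → ZMod 2 | (hammingNorm S : ℝ) ≤ a * n} := by
      refine Finset.card_le_card fun y hy => ?_
      simp only [Finset.mem_filter, Finset.mem_univ, true_and] at hy ⊢
      rw [hy]; exact hmle
    refine le_trans (le_of_eq ?_) (Nat.cast_le.2 hsub)
    congr 2
    ext y; simp
  have hlow := choose_mul_lower n m hmn hn
  rw [mul_assoc, exp_entropy n m hmn hn, ← mul_assoc] at hlow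
  set H := Real.binEntropy ((m : ℝ) / n)
  have h5 : Real.exp (n * H) ≤ (n + 1) * n.choose m := by
    have := mul_le_mul_of_nonneg_right hlow (Real.exp_pos (n * H)).le
    rw [one_mul, mul_assoc, ← Real.exp_add] at this
    simpa using this
  have h6 : (n : ℝ) + 1 ≤ Real.exp (ε / 2 * n) := by linarith
  refine le_trans ?_ hch
  refine le_of_mul_le_mul_left ?_ (Real.exp_pos (ε / 2 * n))
  calc Real.exp (ε / 2 * n) * Real.exp (n * (Real.binEntropy a - ε))
      = Real.exp (n * (Real.binEntropy a - ε / 2)) := by rw [← Real.exp_add]; congr 1; ring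
    _ ≤ Real.exp (n * H) := by gcongr
    _ ≤ (n + 1) * n.choose m := h5
    _ ≤ _ := by gcongr

theorem eventually_poly (c p : ℕ) (ε : ℝ) (hc : 0 < c) (hε : 0 < ε) :
    ∀ᶠ n : ℕ in Filter.atTop,
      2 * ((c * n : ℕ) : ℝ) ^ p * (((c * n : ℕ) : ℝ) + 1) * (n + 1) ≤ Real.exp (ε * n) := by
  have hc' : (1 : ℝ) ≤ c := by exact_mod_cast hc
  have h2 : ∀ᶠ n : ℕ in Filter.atTop,
      ‖(n : ℝ) ^ (p + 2)‖ ≤ 1 / (8 * (c : ℝ) ^ (p + 1)) * ‖Real.exp (ε * (n : ℝ))‖ :=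
    tendsto_natCast_atTop_atTop.eventually
      ((isLittleO_pow_exp_pos_mul_atTop (p + 2) hε).def (by positivity))
  filter_upwards [h2, Filter.eventually_ge_atTop 1] with n h2 hn
  have hn1 : (1 : ℝ) ≤ n := by exact_mod_cast hn
  rw [Real.norm_of_nonneg (by positivity), Real.norm_of_nonneg (Real.exp_pos _).le, one_div,
    ← div_eq_inv_mul, le_div_iff₀ (by positivity)] at h2
  push_cast
  have h3 : (c : ℝ) * n + 1 ≤ 2 * (c * n) := by nlinarith
  calc 2 * ((c : ℝ) * n) ^ p * (c * n + 1) * (n + 1)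
      ≤ 2 * ((c : ℝ) * n) ^ p * (2 * (c * n)) * (2 * n) := by gcongr; linarith
    _ = (n : ℝ) ^ (p + 2) * (8 * (c : ℝ) ^ (p + 1)) := by rw [mul_pow]; ring
    _ ≤ _ := h2

theorem eventually_exp_ge (M ε : ℝ) (hε : 0 < ε) :
    ∀ᶠ n : ℕ in Filter.atTop, M ≤ Real.exp (ε * n) :=
  (Real.tendsto_exp_atTop.comp
    (tendsto_natCast_atTop_atTop.const_mul_atTop hε)).eventually_ge_atTop M

/-- Averaging over the first coordinate: if a nonnegative statistic `F` has small mean and the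
exceptional set is small on each slice with `F ≤ s`, then the exceptional set is small. -/
theorem unifP_prod_lower {α β : Type*} [Fintype α] [Fintype β] [Nonempty α] [Nonempty β]
    (E : α × β → Prop) (F : α → ℝ) (s η : ℝ) (hs : 0 < s) (hη : 0 ≤ η) (hF : ∀ x, 0 ≤ F x)
    (hsum : ∑ x, F x ≤ η * s * Fintype.card α)
    (hgood : ∀ x, F x ≤ s → (#{y | ¬ E (x, y)} : ℝ) ≤ η * Fintype.card β) :
    1 - 2 * η ≤ unifP (α × β) E := by
  have ha : (0 : ℝ) < Fintype.card α := by exact_mod_cast Fintype.card_pos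
  have hb : (0 : ℝ) < Fintype.card β := by exact_mod_cast Fintype.card_pos
  have hbad : (#{p | ¬ E p} : ℝ) = ∑ x, (#{y | ¬ E (x, y)} : ℝ) := by
    simp only [Finset.cast_card, Finset.sum_filter]
    rw [Fintype.sum_prod_type]
  have hx : ∀ x, (#{y | ¬ E (x, y)} : ℝ) ≤ η * Fintype.card β + Fintype.card β / s * F x := by
    intro x
    by_cases h : F x ≤ s
    · have := mul_nonneg (div_nonneg hb.le hs.le) (hF x)
      linarith [hgood x h]
    · have h1 : (#{y | ¬ E (x, y)} : ℝ) ≤ Fintype.card β := by exact_mod_cast Finset.card_le_univ _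
      have h2 : (Fintype.card β : ℝ) ≤ Fintype.card β / s * F x := by
        rw [div_mul_eq_mul_div, le_div_iff₀ hs]
        exact mul_le_mul_of_nonneg_left (not_le.1 h).le hb.le
      have := mul_nonneg hη hb.le
      linarith
  have hbad2 : (#{p | ¬ E p} : ℝ) ≤ 2 * η * (Fintype.card α * Fintype.card β) := by
    rw [hbad]
    refine (Finset.sum_le_sum fun x _ => hx x).trans ?_
    rw [Finset.sum_add_distrib, ← Finset.mul_sum univ F, Finset.sum_const, nsmul_eq_mul, Finset.card_univ]
    have : (Fintype.card β : ℝ) / s * ∑ x, F x ≤ Fintype.card β / s * (η * s * Fintype.card α) := by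
      gcongr
    refine (add_le_add_right this _).trans (le_of_eq ?_)
    field_simp; ring
  have hadd : (#{p | E p} : ℝ) + #{p | ¬ E p} = Fintype.card α * Fintype.card β := by
    rw [← Nat.cast_add, Finset.card_filter_add_card_filter_not, Finset.card_univ, Fintype.card_prod]
    push_cast; rfl
  unfold unifP
  rw [Fintype.card_prod, le_div_iff₀ (by push_cast; positivity)]
  push_cast
  linarith

theorem card_kernel {k n : ℕ} (H : Matrix (Fin k) (Fin n) (ZMod 2)) :
    (2 : ℝ) ^ n / 2 ^ k ≤ #{z : Fin n → ZMod 2 | Matrix.mulVec H z = 0} := by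
  have h := Finset.card_le_mul_card_image (f := fun z => Matrix.mulVec H z)
    (univ : Finset (Fin n → ZMod 2)) (#{z : Fin n → ZMod 2 | Matrix.mulVec H z = 0}) (by
      intro b hb
      obtain ⟨z₀, _, rfl⟩ := Finset.mem_image.1 hb
      refine Finset.card_le_card_of_injOn (fun z => z - z₀) ?_ (fun x _ y _ h => by simpa using h)
      intro z hz
      simp only [Finset.coe_filter, Finset.mem_univ, true_and, Set.mem_ofPred_eq] at hz ⊢
      rw [Matrix.mulVec_sub, hz, sub_self])
  have h2 : #((univ : Finset (Fin n → ZMod 2)).image fun z => Matrix.mulVec H z) ≤ 2 ^ k := by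
    refine (Finset.card_le_univ _).trans (le_of_eq ?_)
    simp [ZMod.card]
  have h3 : #(univ : Finset (Fin n → ZMod 2)) = 2 ^ n := by simp [ZMod.card]
  rw [h3] at h
  rw [div_le_iff₀ (by positivity)]
  exact_mod_cast h.trans (Nat.mul_le_mul_left _ h2)

/-- The finite-blocklength statement, with all asymptotic conditions made explicit. -/
theorem compound_core {k n dv d δ : ℕ} (a D ω γ ε : ℝ) (hn : 0 < n) (ha : 0 < a)
    (ha1 : a < 1 / 2) (haD : a < D) (h0 : 0 < ω) (h1 : ω < 1 / 2)
    (hω : Real.binEntropy ω ≤ γ / 2) (hε : 0 < ε) (hεγ : ε ≤ γ / 2)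
    (hεD : ε ≤ (D - a) ^ 2 / 20)
    (h : k * d = n * dv) (hbig : 2 * dv * d < k * d) (hpos : 0 < dv * d) (hkn : k ≤ n)
    (hδ : 2 ≤ δ) (hδe : Even δ) (hv : (1 - 2 * ω) ^ (δ - 2) ≤ 1 / 8) (hδd : δ ≤ d) (hd : Even d)
    (hK : (2 : ℝ) ^ k = Real.exp (n * (Real.binEntropy a - γ)))
    (hball : Real.exp (n * (Real.binEntropy a - ε)) ≤ ballCard n (a * n))
    (hpoly : 2 * ((k * d : ℕ) : ℝ) ^ (2 * (4 * dv * d)) * (((k * d : ℕ) : ℝ) + 1) * (n + 1)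
      ≤ Real.exp (ε * n))
    (h3 : 3 ≤ Real.exp (ε * n)) :
    Nonempty {H : Matrix (Fin k) (Fin n) (ZMod 2) // regularLDPC dv d H} ∧
    1 - 2 * Real.exp (-(ε * n)) ≤
      unifP ({H : Matrix (Fin k) (Fin n) (ZMod 2) // regularLDPC dv d H} ×
              ((Fin n → Fin δ → Fin n) × (Fin n → ZMod 2)))
            (fun ω => ∃ z : Fin n → ZMod 2,
              Matrix.mulVec (ω.1 : Matrix (Fin k) (Fin n) (ZMod 2)) z = 0 ∧
                (hammingDist (ldgmEnc ω.2.1 z) ω.2.2 : ℝ) ≤ D * n) := by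
  have hne := regular_nonempty h hbig
  refine ⟨hne, ?_⟩
  have hn0 : Nonempty (Fin n) := ⟨⟨0, hn⟩⟩
  set Reg := {H : Matrix (Fin k) (Fin n) (ZMod 2) // regularLDPC dv d H} with hReg
  refine unifP_prod_lower (α := Reg) (β := (Fin n → Fin δ → Fin n) × (Fin n → ZMod 2))
    (fun ω => ∃ z : Fin n → ZMod 2, Matrix.mulVec ω.1.1 z = 0 ∧
      (hammingDist (ldgmEnc ω.2.1 z) ω.2.2 : ℝ) ≤ D * n) (fun H : Reg => ∑ z : Fin n → ZMod 2 with
      Matrix.mulVec (H : Matrix (Fin k) (Fin n) (ZMod 2)) z = 0 ∧ midWeight ω z, midFactor n δ z)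
    (Real.exp (2 * ε * n) * 2 ^ n / 2 ^ k) (Real.exp (-(ε * n))) (by positivity) (Real.exp_pos _).le ?_ ?_ ?_
  · intro H
    refine Finset.sum_nonneg fun z _ => pow_nonneg ?_ _
    have : 0 ≤ (1 - 2 * ((hammingNorm z : ℝ) / n)) ^ δ := hδe.pow_nonneg _
    linarith
  · have hs := sum_mid_le ω h0 h1 hn h hbig hpos hkn hδ hδe hv hδd hd
    have hsub := Finset.sum_subtype (Finset.univ.filter fun H : Matrix (Fin k) (Fin n) (ZMod 2) =>
      regularLDPC dv d H) (F := inferInstance)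
      (p := fun H => regularLDPC dv d H) (by simp) (fun H =>
        ∑ z : Fin n → ZMod 2 with Matrix.mulVec H z = 0 ∧ midWeight ω z, midFactor n δ z)
    rw [← hsub, Fintype.card_subtype]
    refine hs.trans ?_
    have e : Real.exp (-(ε * n)) * (Real.exp (2 * ε * n) * 2 ^ n / 2 ^ k)
        = Real.exp (ε * n) * 2 ^ n / 2 ^ k := by
      have : Real.exp (ε * n) = Real.exp (-(ε * n)) * Real.exp (2 * ε * n) := by
        rw [← Real.exp_add]; congr 1; ring
      rw [this]; ring
    rw [e]
    rw [← mul_assoc]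
    gcongr
  · intro H hH
    set C : Finset (Fin n → ZMod 2) := {z | Matrix.mulVec (H : Matrix (Fin k) (Fin n) (ZMod 2)) z = 0}
      with hC
    have hmem : ∀ z, z ∈ C ↔ Matrix.mulVec (H : Matrix (Fin k) (Fin n) (ZMod 2)) z = 0 := by
      intro z; simp [hC]
    have hsub : ∀ x ∈ C, ∀ y ∈ C, x - y ∈ C := by
      intro x hx y hy
      rw [hmem] at hx hy ⊢
      rw [Matrix.mulVec_sub, hx, hy, sub_self]
    have hC0 : C.Nonempty := ⟨0, by rw [hmem, Matrix.mulVec_zero]⟩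
    have hcov := covered_lower (δ := δ) hn hδe a ω γ ε _ ha ha1 h0 h1 hω hεγ hK C hsub
      (card_kernel _) (by rw [hC, Finset.filter_filter]; exact hH) hball h3 hε
    have hun := uncovered_upper hn a D ε haD hεD C hC0 hcov
    have hcard : (Fintype.card ((Fin n → Fin δ → Fin n) × (Fin n → ZMod 2)) : ℝ) =
        ((n : ℝ) ^ δ) ^ n * 2 ^ n := by simp [ZMod.card]
    rw [hcard]
    simpa only [hmem] using hun

theorem binEnt_eq (x : ℝ) : binEnt x = Real.binEntropy x / Real.log 2 := by
  unfold binEnt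
  rw [Real.binEntropy, Real.logb, Real.logb, Real.log_inv, Real.log_inv]
  ring

/-- A distortion `a < D` and a rational rate strictly between `h(D) - Δ` and `h(a)`. -/
theorem exists_rate (D Δ : ℝ) (hD : 0 < D) (hD1 : D < 1 / 2) (hΔ : 0 < Δ) :
    ∃ a : ℝ, 0 < a ∧ a < D ∧ ∃ p q : ℕ, 0 < p ∧ p < q ∧ binEnt D - Δ ≤ (p : ℝ) / q ∧
      (p : ℝ) / q * Real.log 2 < Real.binEntropy a := by
  have hl : 0 < Real.log 2 := Real.log_pos (by norm_num)
  have h1 : ∀ᶠ a in nhdsWithin D (Set.Iio D),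
      Real.binEntropy D - Δ * Real.log 2 < Real.binEntropy a :=
    (Real.binEntropy_continuous.tendsto D).eventually
      (lt_mem_nhds (by nlinarith [mul_pos hΔ hl])) |>.filter_mono nhdsWithin_le_nhds
  have h2 : ∀ᶠ a in nhdsWithin D (Set.Iio D), a ∈ Set.Ioo 0 D := Ioo_mem_nhdsLT hD
  obtain ⟨a, ha, ha2⟩ := (h1.and h2).exists
  have hpos : 0 < Real.binEntropy a := Real.binEntropy_pos ha2.1 (by linarith [ha2.2])
  have hlt : max 0 (binEnt D - Δ) < Real.binEntropy a / Real.log 2 := by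
    rw [max_lt_iff]
    refine ⟨div_pos hpos hl, ?_⟩
    rw [binEnt_eq, lt_div_iff₀ hl, sub_mul, div_mul_cancel₀ _ hl.ne']
    exact ha
  obtain ⟨q, hq1, hq2⟩ := exists_rat_btwn hlt
  rw [max_lt_iff] at hq1
  have hq0 : 0 < q := by exact_mod_cast hq1.1
  have hnum : 0 < q.num := Rat.num_pos.2 hq0
  obtain ⟨p, hp⟩ := Int.eq_ofNat_of_zero_le hnum.le
  have hqe : (q : ℝ) = (p : ℝ) / q.den := by
    rw [Rat.cast_def, hp]; simp
  have hden : (0 : ℝ) < q.den := by exact_mod_cast q.den_pos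
  refine ⟨a, ha2.1, ha2.2, p, q.den, by omega, ?_, ?_, ?_⟩
  · have hq3 : (q : ℝ) < 1 := by
      refine hq2.trans_le ?_
      rw [div_le_one hl]
      exact Real.binEntropy_le_log_two
    rw [hqe, div_lt_one hden] at hq3
    exact_mod_cast hq3
  · rw [← hqe]; exact hq1.2.le
  · rw [← hqe]; rwa [lt_div_iff₀ hl] at hq2

theorem exists_omega (γ : ℝ) (hγ : 0 < γ) :
    ∃ ω : ℝ, 0 < ω ∧ ω < 1 / 2 ∧ Real.binEntropy ω ≤ γ := by
  have h1 : ∀ᶠ a in nhdsWithin (0 : ℝ) (Set.Ioi 0), Real.binEntropy a < γ :=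
    (Real.binEntropy_continuous.tendsto 0).eventually
      (gt_mem_nhds (by rw [Real.binEntropy_zero]; exact hγ)) |>.filter_mono nhdsWithin_le_nhds
  have h2 : ∀ᶠ a in nhdsWithin (0 : ℝ) (Set.Ioi 0), a ∈ Set.Ioo (0 : ℝ) (1 / 2) :=
    Ioo_mem_nhdsGT (by norm_num)
  obtain ⟨a, ha, ha2⟩ := (h1.and h2).exists
  exact ⟨a, ha2.1, ha2.2, ha.le⟩

/-- main theorem: for every distortion `D ∈ (0,1/2)` and every rate gap
`Δ > 0`, there are a finite even LDGM degree `δ`, LDPC degrees `d_v < d_c` whose rate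
`1 - d_v/d_c` is within `Δ` of the rate-distortion function `1 - h(D)`, and a constant
`c > 0` such that for all large admissible blocklengths `n`, the compound code (a rate-1
degree-`δ` LDGM code on top of a uniformly random `(d_v,d_c)`-regular LDPC code with
`k = d_v·n/d_c` checks) quantizes a uniform source to within distortion `D·n` with
probability at least `1 - exp(-c·n)`.  The sample space is the product of the set of
regular parity-check matrices, the LDGM index choices, and the source, with the uniform
distribution (so the three are independent, `H` uniform on the regular matrices). -/
theorem compound_codes_achieve_rate_distortion :
    ∀ D : ℝ, D ∈ Set.Ioo (0 : ℝ) (1 / 2) → ∀ Δ : ℝ, 0 < Δ →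
      ∃ δ : ℕ, Even δ ∧ 2 ≤ δ ∧
      ∃ dv dc : ℕ, 0 < dv ∧ dv < dc ∧ 1 - (dv : ℝ) / dc ≤ 1 - binEnt D + Δ ∧
      ∃ c : ℝ, 0 < c ∧
      ∃ N₀ : ℕ, ∀ n : ℕ, N₀ ≤ n → dc ∣ dv * n → (∃ Dn : ℕ, (Dn : ℝ) = D * n) →
        Nonempty {H : Matrix (Fin (dv * n / dc)) (Fin n) (ZMod 2) // regularLDPC dv dc H} ∧
        unifP ({H : Matrix (Fin (dv * n / dc)) (Fin n) (ZMod 2) // regularLDPC dv dc H} ×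
              ((Fin n → Fin δ → Fin n) × (Fin n → ZMod 2)))
            (fun ω => ∃ z : Fin n → ZMod 2,
              Matrix.mulVec (ω.1 : Matrix (Fin (dv * n / dc)) (Fin n) (ZMod 2)) z = 0 ∧
                (hammingDist (ldgmEnc ω.2.1 z) ω.2.2 : ℝ) ≤ D * n) ≥
          1 - Real.exp (-c * n) := by
  intro D hD Δ hΔ
  obtain ⟨a, ha, haD, p, q, hp, hpq, hrate, hent⟩ := exists_rate D Δ hD.1 hD.2 hΔ
  set γ := Real.binEntropy a - (p : ℝ) / q * Real.log 2 with hγ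
  have hγ0 : 0 < γ := by linarith
  obtain ⟨ω, h0, h1, hω⟩ := exists_omega (γ / 2) (by linarith)
  obtain ⟨N, hN⟩ := exists_pow_lt_of_lt_one (show (0 : ℝ) < 1 / 8 by norm_num)
    (show 1 - 2 * ω < 1 by linarith)
  set δ := 2 * N + 2 with hδ
  -- scaling both LDPC degrees keeps the rate and makes the check degree even and at least `δ`
  set dv := p * (2 * δ) with hdv
  set dc := q * (2 * δ) with hdc
  have hδe : Even δ := ⟨N + 1, by omega⟩
  have hq : 0 < q := by omega
  have hdv0 : 0 < dv := by positivity
  have hdvc : dv < dc := Nat.mul_lt_mul_of_pos_right hpq (by omega)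
  have hratio : (dv : ℝ) / dc = (p : ℝ) / q := by
    rw [hdv, hdc]; push_cast
    exact mul_div_mul_right _ _ (by positivity)
  set ε := min (γ / 2) ((D - a) ^ 2 / 20) with hε
  have hε0 : 0 < ε := lt_min (by linarith) (by have := pow_pos (sub_pos.2 haD) 2; linarith)
  refine ⟨δ, hδe, by omega, dv, dc, hdv0, hdvc, by rw [hratio]; linarith, ε / 2, by linarith, ?_⟩
  have hev := (eventually_ball a ε ha (by linarith [hD.2]) hε0).and
    ((eventually_poly dv (2 * (4 * dv * dc)) ε hdv0 hε0).and
      ((eventually_exp_ge 3 ε hε0).and ((eventually_exp_ge 2 (ε / 2) (by linarith)).and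
        (Filter.eventually_gt_atTop (2 * dc)))))
  obtain ⟨N₀, hN₀⟩ := Filter.eventually_atTop.1 hev
  refine ⟨N₀, fun n hn hdvd _ => ?_⟩
  obtain ⟨hball, hpoly, h3, h2, hbig⟩ := hN₀ n hn
  set k := dv * n / dc with hk
  have hkd : k * dc = dv * n := Nat.div_mul_cancel hdvd
  have hdc0 : 0 < dc := by omega
  have hkn : k ≤ n := Nat.le_of_mul_le_mul_right
    (by rw [hkd, mul_comm]; exact Nat.mul_le_mul_left n hdvc.le) hdc0
  -- `k log 2 = n (p / q) log 2`, so `2 ^ k` is exactly `exp (n (binEntropy a - γ))`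
  have hkK : (2 : ℝ) ^ k = Real.exp (n * (Real.binEntropy a - γ)) := by
    have hkr : (k : ℝ) = n * ((p : ℝ) / q) := by
      rw [← hratio, ← mul_div_assoc, eq_div_iff (by positivity), mul_comm (n : ℝ)]
      exact_mod_cast hkd
    rw [hγ, sub_sub_cancel, ← mul_assoc, ← hkr, Real.exp_nat_mul, Real.exp_log (by norm_num)]
  have hcore := compound_core (k := k) (n := n) (dv := dv) (d := dc) (δ := δ) a D ω γ ε (by omega)
    ha (by linarith [hD.2]) haD h0 h1 hω hε0 (min_le_left _ _) (min_le_right _ _)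
    (by rw [hkd, mul_comm]) (by rw [hkd]; nlinarith) (by positivity) hkn (by omega) hδe
    (by
      have h8 : (1 - 2 * ω) ^ (δ - 2) ≤ (1 - 2 * ω) ^ N :=
        pow_le_pow_of_le_one (by linarith) (by linarith) (by omega)
      linarith)
    (by nlinarith) ⟨q * δ, by rw [hdc]; ring⟩ hkK hball (by rw [hkd]; exact hpoly) h3
  refine ⟨hcore.1, ?_⟩
  refine le_trans ?_ hcore.2
  have e1 : Real.exp (-(ε * n)) = Real.exp (-(ε / 2) * n) * Real.exp (-(ε / 2) * n) := by
    rw [← Real.exp_add]; congr 1; ring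
  have e2 : 2 * Real.exp (-(ε / 2) * n) ≤ 1 := by
    rw [neg_mul, Real.exp_neg, ← div_eq_mul_inv, div_le_one (Real.exp_pos _)]
    exact h2
  have e3 := Real.exp_pos (-(ε / 2) * n)
  rw [e1]
  nlinarith
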